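/- arXiv:1206.3718 — 3 statements merged into one kernel-verified Lean document; each statement's English description precedes it below -/
import Mathlib

section
/- There exists a universal constant c ≥ 1 such that every routing instance with congestion C and dilation D admits a feasible schedule (load at most 1) with makespan at most c·(C+D). -/
/-- A routing instance: a finite directed multigraph together with packets
`0,…,k-1`, where packet `i` is given a list of edges `path i`. -/
structure RInst where
  V : Type
  E : Type
  [fintE : Fintype E]
  src : E → V
  dst : E → V
  k : ℕ
  path : Fin k → List E

attribute [instance] RInst.fintE

namespace RInst

/-- The paths are directed paths (consecutive edges fit head-to-tail) and
use no edge more than once. -/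
def Valid (I : RInst) : Prop :=
  (∀ i, List.Chain' (fun e f => I.dst e = I.src f) (I.path i)) ∧
  (∀ i, (I.path i).Nodup)

/-- `σ i t` is the number of edges of `path i` traversed by time `t`. -/
def IsSchedule (I : RInst) (σ : Fin I.k → ℕ → ℕ) : Prop :=
  (∀ i, σ i 0 = 0) ∧
  (∀ i t, σ i (t + 1) = σ i t ∨ σ i (t + 1) = σ i t + 1) ∧
  (∀ i t, σ i t ≤ (I.path i).length)

/-- Packet `i` crosses edge `e` in time step `t+1`. -/
def Crosses (I : RInst) (σ : Fin I.k → ℕ → ℕ) (i : Fin I.k) (e : I.E) (t : ℕ) : Prop :=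
  σ i (t + 1) = σ i t + 1 ∧ (I.path i)[σ i t]? = some e

/-- The load of the schedule is at most `c`: in every time step every edge
is crossed by at most `c` packets. -/
def LoadLE (I : RInst) (σ : Fin I.k → ℕ → ℕ) (c : ℕ) : Prop :=
  ∀ (e : I.E) (t : ℕ), Nat.card {i : Fin I.k | I.Crosses σ i e t} ≤ c

/-- All packets have arrived by time `T` (i.e. the makespan is at most `T`). -/
def CompletedBy (I : RInst) (σ : Fin I.k → ℕ → ℕ) (T : ℕ) : Prop :=
  ∀ i, σ i T = (I.path i).length

/-- The congestion: the maximum number of paths using a common edge. -/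
noncomputable def congestion (I : RInst) : ℕ :=
  Finset.univ.sup fun e : I.E => Nat.card {i : Fin I.k | e ∈ I.path i}

/-- The dilation: the maximum length of a path. -/
noncomputable def dilation (I : RInst) : ℕ :=
  Finset.univ.sup fun i : Fin I.k => (I.path i).length

end RInst

/-!
The packets start simultaneously and never wait, and the congestion of this schedule is then made
more and more uniform in time. Suppose that every edge is crossed at most `1 + 4 / (2 * y)` times
per time step, on average over every window of length `W = (2 * y) ^ 4`. Cut time into blocks of
length `W ^ 2`, open a gap of length `W` after each block, and let each packet wait in each block
for a random time below `W`. By Chernoff's bound a fixed window of the shorter length `y ^ 4` then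
carries more than `1 + 4 / y` crossings of a fixed edge per time step with probability
exponentially small in `y`, while it interacts only with polynomially many other windows, so that
by the Lovász local lemma some choice of delays is good for all windows at once. Starting from
`y ^ 4` of order `C + D`, one halves `y` until it is constant. The gaps lengthen the schedule by
factors whose product is bounded, and the remaining constant congestion is removed by slowing down
time by a constant factor.
-/

open MeasureTheory ProbabilityTheory
open scoped Finset

/-! ### The Lovász local lemma and Chernoff's bound -/

section LocalLemma

variable {Ω κ : Type*}

/-- The event that none of the bad events `A b` with `b ∈ S` occurs. -/
def avoiding (A : κ → Set Ω) (S : Finset κ) : Set Ω :=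
  {ω | ∀ b ∈ S, ω ∉ A b}

theorem avoiding_anti (A : κ → Set Ω) {S T : Finset κ} (h : S ⊆ T) :
    avoiding A T ⊆ avoiding A S :=
  fun _ hω b hb => hω b (h hb)

theorem measurableSet_avoiding [MeasurableSpace Ω] {A : κ → Set Ω} {S : Finset κ}
    (hA : ∀ b ∈ S, MeasurableSet (A b)) : MeasurableSet (avoiding A S) := by
  have : avoiding A S = ⋂ b ∈ S, (A b)ᶜ := by ext; simp [avoiding]
  rw [this]
  exact Finset.measurableSet_biInter S fun b hb => (hA b hb).compl

variable [MeasurableSpace Ω] {μ : Measure Ω} [IsFiniteMeasure μ] {A : κ → Set Ω}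

theorem measureReal_avoiding_le_add_sum [DecidableEq κ] (R T : Finset κ) :
    μ.real (avoiding A T) ≤
      μ.real (avoiding A (R ∪ T)) + ∑ b ∈ R, μ.real (A b ∩ avoiding A T) := by
  have hcover : avoiding A T ⊆ avoiding A (R ∪ T) ∪ ⋃ b ∈ R, A b ∩ avoiding A T := by
    intro ω hω
    by_cases h : ∃ b ∈ R, ω ∈ A b
    · obtain ⟨b, hb, hωb⟩ := h
      exact Or.inr (Set.mem_biUnion hb ⟨hωb, hω⟩)
    · push Not at h
      exact Or.inl fun b hb => (Finset.mem_union.1 hb).elim (h b) (hω b)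
  calc μ.real (avoiding A T)
      ≤ μ.real (avoiding A (R ∪ T) ∪ ⋃ b ∈ R, A b ∩ avoiding A T) := measureReal_mono hcover
    _ ≤ μ.real (avoiding A (R ∪ T)) + μ.real (⋃ b ∈ R, A b ∩ avoiding A T) :=
        measureReal_union_le _ _
    _ ≤ _ := by gcongr; exact measureReal_biUnion_finset_le _ _

variable {nb : κ → Finset κ} {d : ℕ} {p : ℝ}

-- The neighbours of `a` in `S` have, by induction, total conditional probability at most `1 / 2`
-- given that the rest of `S` is avoided, so requiring them to be avoided as well at most doubles
-- the conditional probability of `A a`.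
theorem measureReal_inter_avoiding_le (hp : 0 ≤ p) (hd : ∀ a, #(nb a) ≤ d)
    (hpd : 4 * p * (d + 1) ≤ 1)
    (hA : ∀ a (S : Finset κ), Disjoint S (nb a) →
      μ.real (A a ∩ avoiding A S) ≤ p * μ.real (avoiding A S)) (S : Finset κ) (a : κ) :
    μ.real (A a ∩ avoiding A S) ≤ 2 * p * μ.real (avoiding A S) := by
  classical
  induction S using Finset.strongInduction generalizing a with
  | H S ih =>
  set R := S.filter (· ∈ nb a)
  set T := S.filter (· ∉ nb a)
  have hRT : R ∪ T = S := Finset.filter_union_filter_not_eq _ _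
  have hT : μ.real (A a ∩ avoiding A T) ≤ p * μ.real (avoiding A T) :=
    hA a T (Finset.disjoint_left.2 fun _ hx => (Finset.mem_filter.1 hx).2)
  have hcard : (#R : ℝ) ≤ d := by
    have hR : R ⊆ nb a := fun _ hx => (Finset.mem_filter.1 hx).2
    exact_mod_cast (Finset.card_le_card hR).trans (hd a)
  have hnbr : ∀ b ∈ R, μ.real (A b ∩ avoiding A T) ≤ 2 * p * μ.real (avoiding A T) := by
    intro b hb
    obtain ⟨hbS, hba⟩ := Finset.mem_filter.1 hb
    exact ih T (Finset.filter_ssubset.2 ⟨b, hbS, not_not.2 hba⟩) b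
  have hhalf : μ.real (avoiding A T) ≤ 2 * μ.real (avoiding A S) := by
    have hunion := measureReal_avoiding_le_add_sum (μ := μ) (A := A) R T
    have hsum := Finset.sum_le_card_nsmul _ _ _ hnbr
    rw [hRT] at hunion
    rw [nsmul_eq_mul] at hsum
    have hT0 : 0 ≤ μ.real (avoiding A T) := measureReal_nonneg
    have hR : #R * (2 * p) ≤ 1 / 2 := by nlinarith
    nlinarith
  calc μ.real (A a ∩ avoiding A S) ≤ μ.real (A a ∩ avoiding A T) :=
        measureReal_mono (Set.inter_subset_inter_right _ (avoiding_anti A (S.filter_subset _)))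
    _ ≤ p * μ.real (avoiding A T) := hT
    _ ≤ p * (2 * μ.real (avoiding A S)) := by gcongr
    _ = 2 * p * μ.real (avoiding A S) := by ring

theorem lovasz_local_lemma [NeZero μ] (hp : 0 ≤ p) (hd : ∀ a, #(nb a) ≤ d)
    (hpd : 4 * p * (d + 1) ≤ 1)
    (hA : ∀ a (S : Finset κ), Disjoint S (nb a) →
      μ.real (A a ∩ avoiding A S) ≤ p * μ.real (avoiding A S)) (S : Finset κ) :
    (avoiding A S).Nonempty := by
  classical
  suffices hpos : 0 < μ.real (avoiding A S) from nonempty_of_measureReal_ne_zero hpos.ne'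
  induction S using Finset.induction_on with
  | empty => simp [avoiding, measureReal_univ_pos]
  | insert a S _ ih =>
    have hunion := measureReal_avoiding_le_add_sum (μ := μ) (A := A) {a} S
    have hcond := measureReal_inter_avoiding_le hp hd hpd hA S a
    rw [Finset.sum_singleton, ← Finset.insert_eq] at hunion
    have : p ≤ 1 / 4 := by nlinarith [mul_nonneg hp d.cast_nonneg]
    nlinarith

end LocalLemma

section Chernoff

variable {Ω ι : Type*} {mΩ : MeasurableSpace Ω} {μ : Measure Ω}

theorem mgf_indicator_one [IsProbabilityMeasure μ] {s : Set Ω} (hs : MeasurableSet s) (t : ℝ) :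
    mgf (s.indicator fun _ => 1) μ t = 1 + (Real.exp t - 1) * μ.real s := by
  have hexp : (fun ω => Real.exp (t * s.indicator (fun _ => 1) ω)) =
      fun ω => 1 + s.indicator (fun _ => Real.exp t - 1) ω := by
    funext ω
    by_cases h : ω ∈ s <;> simp [h]
  rw [mgf, hexp, integral_add (integrable_const _) ((integrable_const _).indicator hs),
    integral_indicator_const _ hs]
  simp [mul_comm]

theorem measurableSet_le_sum_indicator [Fintype ι] {G : ι → Set Ω}
    (hG : ∀ i, MeasurableSet (G i)) (r : ℝ) :
    MeasurableSet {ω | r ≤ ∑ i, (G i).indicator (fun _ => 1) ω} :=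
  measurableSet_le measurable_const <|
    Finset.measurable_sum _ fun i _ => measurable_const.indicator (hG i)

theorem measureReal_le_sum_indicator_le [Fintype ι] {G : ι → Set Ω} (hG : iIndepSet G μ)
    (hm : ∀ i, MeasurableSet (G i)) {t : ℝ} (ht : 0 ≤ t) (r : ℝ) :
    μ.real {ω | r ≤ ∑ i, (G i).indicator (fun _ => 1) ω} ≤
      Real.exp ((Real.exp t - 1) * ∑ i, μ.real (G i) - t * r) := by
  have := hG.isProbabilityMeasure
  set X : ι → Ω → ℝ := fun i => (G i).indicator fun _ => 1
  have hX : ∀ i, Measurable (X i) := fun i => measurable_const.indicator (hm i)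
  have hint : Integrable (fun ω => Real.exp (t * (∑ i, X i) ω)) μ := by
    simp only [Finset.sum_apply]
    refine .of_bound (by fun_prop) (Real.exp (t * Fintype.card ι)) (.of_forall fun ω => ?_)
    have hle : ∑ i, X i ω ≤ Fintype.card ι := by
      simpa using Finset.sum_le_card_nsmul Finset.univ (X · ω) 1 fun i _ =>
        Set.indicator_le_self' (fun _ _ => zero_le_one) ω
    rw [Real.norm_of_nonneg (Real.exp_pos _).le]
    gcongr
  have hmgf : mgf (∑ i, X i) μ t ≤ Real.exp ((Real.exp t - 1) * ∑ i, μ.real (G i)) := by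
    rw [hG.iIndepFun_indicator.mgf_sum hX, Finset.mul_sum, Real.exp_sum]
    refine Finset.prod_le_prod (fun i _ => mgf_nonneg) fun i _ => ?_
    rw [mgf_indicator_one (hm i), add_comm]
    exact Real.add_one_le_exp _
  calc μ.real {ω | r ≤ ∑ i, X i ω}
      ≤ Real.exp (-t * r) * mgf (∑ i, X i) μ t := by
        simpa only [Finset.sum_apply] using measure_ge_le_exp_mul_mgf r ht hint
    _ ≤ Real.exp (-t * r) * Real.exp ((Real.exp t - 1) * ∑ i, μ.real (G i)) := by gcongr
    _ = _ := by rw [← Real.exp_add]; ring_nf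

end Chernoff

section Combined

variable {Ω ι κ : Type*} [Fintype ι] {mΩ : MeasurableSpace Ω} {μ : Measure Ω}
  {F : ι → MeasurableSpace Ω} {G : κ → ι → Set Ω}

theorem measureReal_inter_avoiding_of_iIndep (hF : ∀ i, F i ≤ mΩ) (hind : iIndep F μ)
    (hG : ∀ a i, MeasurableSet[F i] (G a i)) (r : ℝ) {a : κ} {S : Finset κ}
    (hS : ∀ b ∈ S, ∀ i, G a i = ∅ ∨ G b i = ∅) :
    let A : κ → Set Ω := fun a => {ω | r ≤ ∑ i, (G a i).indicator (fun _ => 1) ω}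
    μ.real (A a ∩ avoiding A S) = μ.real (A a) * μ.real (avoiding A S) := by
  intro A
  have hmeas : ∀ (I : Set ι) (b : κ), (∀ i ∉ I, G b i = ∅) →
      MeasurableSet[⨆ i ∈ I, F i] (A b) := by
    intro I b hb
    refine @measurableSet_le_sum_indicator _ _ _ (_) _ (fun i => ?_) r
    by_cases hi : i ∈ I
    · exact le_iSup₂ (f := fun i _ => F i) i hi _ (hG b i)
    · rw [hb i hi]
      exact @MeasurableSet.empty _ (_)
  set I : Set ι := {i | G a i ≠ ∅}
  have hAa : MeasurableSet[⨆ i ∈ I, F i] (A a) := hmeas I a fun i hi => not_not.1 hi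
  have hAS : MeasurableSet[⨆ i ∈ Iᶜ, F i] (avoiding A S) :=
    @measurableSet_avoiding _ _ (_) _ _ fun b hb =>
      hmeas Iᶜ b fun i hi => (hS b hb i).resolve_left (not_not.1 hi)
  have hindep : Indep (⨆ i ∈ I, F i) (⨆ i ∈ Iᶜ, F i) μ :=
    indep_iSup_of_disjoint hF hind disjoint_compl_right
  simp only [measureReal_def, (Indep_iff _ _ _).1 hindep _ _ hAa hAS, ENNReal.toReal_mul]

theorem exists_forall_sum_indicator_lt (hF : ∀ i, F i ≤ mΩ) (hind : iIndep F μ)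
    (hG : ∀ a i, MeasurableSet[F i] (G a i)) {nb : κ → Finset κ} {d : ℕ}
    (hd : ∀ a, #(nb a) ≤ d) (hnb : ∀ a, ∀ b ∉ nb a, ∀ i, G a i = ∅ ∨ G b i = ∅)
    {t r Λ : ℝ} (ht : 0 ≤ t) (hΛ : ∀ a, ∑ i, μ.real (G a i) ≤ Λ)
    (hexp : 4 * Real.exp ((Real.exp t - 1) * Λ - t * r) * (d + 1) ≤ 1) (S : Finset κ) :
    ∃ ω, ∀ a ∈ S, ∑ i, (G a i).indicator (fun _ => (1 : ℝ)) ω < r := by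
  have := hind.isProbabilityMeasure
  set A : κ → Set Ω := fun a => {ω | r ≤ ∑ i, (G a i).indicator (fun _ => 1) ω}
  have hA : ∀ a, μ.real (A a) ≤ Real.exp ((Real.exp t - 1) * Λ - t * r) := by
    intro a
    have hset : iIndepSet (G a) μ := (iIndepSet_iff_meas_biInter fun i => hF i _ (hG a i)).2
      fun T => hind.meas_biInter fun i _ => hG a i
    refine (measureReal_le_sum_indicator_le hset (fun i => hF i _ (hG a i)) ht r).trans ?_
    have : 0 ≤ Real.exp t - 1 := by linarith [Real.one_le_exp ht]
    gcongr
    exact hΛ a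
  obtain ⟨ω, hω⟩ := lovasz_local_lemma (μ := μ) (A := A) (Real.exp_pos _).le hd hexp
    (fun a S hS => by
      rw [measureReal_inter_avoiding_of_iIndep hF hind hG r fun b hb =>
        hnb a b (Finset.disjoint_left.1 hS hb)]
      gcongr
      exact hA a) S
  exact ⟨ω, fun a ha => not_le.1 (hω a ha)⟩

theorem exists_forall_card_mem_lt {β : Type*} [Fintype β] [Nonempty β] [DecidableEq β]
    {D : κ → ι → Finset β} {nb : κ → Finset κ} {d : ℕ} (hd : ∀ a, #(nb a) ≤ d)
    (hnb : ∀ a, ∀ b ∉ nb a, ∀ i, D a i = ∅ ∨ D b i = ∅) {t r Λ : ℝ} (ht : 0 ≤ t)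
    (hΛ : ∀ a, ∑ i, (#(D a i) : ℝ) ≤ Λ * Fintype.card β)
    (hexp : 4 * Real.exp ((Real.exp t - 1) * Λ - t * r) * (d + 1) ≤ 1) (S : Finset κ) :
    ∃ f : ι → β, ∀ a ∈ S, (#{i | f i ∈ D a i} : ℝ) < r := by
  let _ : MeasurableSpace β := ⊤
  let ν : Measure β := uniformOn Set.univ
  have : IsProbabilityMeasure ν :=
    isProbabilityMeasure_uniformOn Set.finite_univ Set.univ_nonempty
  have hν : ∀ s : Finset β, ν.real s = #s / Fintype.card β := by
    intro s
    simp [ν, measureReal_def, uniformOn_univ]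
  have hind : iIndepFun (fun i (f : ι → β) => f i) (Measure.pi fun _ => ν) :=
    iIndepFun_pi (X := fun _ => id) fun _ => aemeasurable_id
  obtain ⟨f, hf⟩ := exists_forall_sum_indicator_lt
    (F := fun i => (inferInstance : MeasurableSpace β).comap fun f : ι → β => f i)
    (G := fun a i => {f | f i ∈ D a i}) (r := r) (Λ := Λ)
    (fun i => (measurable_pi_apply i).comap_le) hind (fun a i => ⟨D a i, trivial, rfl⟩) hd
    (fun a b hb i => (hnb a b hb i).imp (by simp +contextual) (by simp +contextual)) ht
    (fun a => by
      have hμ : ∀ i, (Measure.pi fun _ : ι => ν).real {f | f i ∈ D a i} =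
          #(D a i) / Fintype.card β := fun i => by
        rw [← hν]
        exact (measurePreserving_eval (fun _ : ι => ν) i).measureReal_preimage
          MeasurableSpace.measurableSet_top.nullMeasurableSet
      simp only [hμ, ← Finset.sum_div]
      exact (div_le_iff₀ (by exact_mod_cast Fintype.card_pos)).2 (hΛ a))
    hexp S
  refine ⟨f, fun a ha => ?_⟩
  simpa [Set.indicator_apply] using hf a ha

end Combined

/-! ### Random delays -/

/-- Every edge is crossed at most `c` times in every window of `s` consecutive time steps, where
the crossing `j` takes place on the edge `ed j` at time `τ j`. -/
def WindowLE {J E : Type*} [Fintype J] [DecidableEq E] (ed : J → E) (τ : J → ℕ) (s c : ℕ) : Prop :=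
  ∀ e t, #{j | ed j = e ∧ t ≤ τ j ∧ τ j < t + s} ≤ c

section Delays

variable {J E ι : Type*}

/-- The windows of length `T`, each given by its edge and its first time step, in which the
crossing `j` can end up when its time `v j` is delayed by less than `W`. -/
def reachableWindows (ed : J → E) (v : J → ℕ) (W T : ℕ) (j : J) : Finset (E × ℕ) :=
  {ed j} ×ˢ Finset.Ico (v j + 1 - T) (v j + W)

theorem mem_reachableWindows {ed : J → E} {v : J → ℕ} {W T : ℕ} {j : J} {a : E × ℕ} :
    a ∈ reachableWindows ed v W T j ↔ ed j = a.1 ∧ v j < a.2 + T ∧ a.2 < v j + W := by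
  simp only [reachableWindows, Finset.mem_product, Finset.mem_singleton, Finset.mem_Ico,
    eq_comm (a := a.1)]
  grind

theorem card_reachableWindows_le (ed : J → E) (v : J → ℕ) {W T : ℕ} (hT : T ≤ W) (j : J) :
    #(reachableWindows ed v W T j) ≤ 2 * W := by
  rw [reachableWindows, Finset.card_product, Finset.card_singleton, Nat.card_Ico]
  lia

variable [Fintype J] [DecidableEq E]

theorem WindowLE.card_mem_reachableWindows_le {ed : J → E} {v : J → ℕ} {W T H : ℕ} (hT : T ≤ W)
    (hH : WindowLE ed v W H) (a : E × ℕ) :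
    #{j | a ∈ reachableWindows ed v W T j} ≤ 2 * H := by
  classical
  have hcover : ({j | a ∈ reachableWindows ed v W T j} : Finset J) ⊆
      ({j | ed j = a.1 ∧ a.2 - W ≤ v j ∧ v j < a.2 - W + W} : Finset J) ∪
      ({j | ed j = a.1 ∧ a.2 ≤ v j ∧ v j < a.2 + W} : Finset J) := by
    intro j
    simp only [Finset.mem_filter_univ, Finset.mem_union, mem_reachableWindows]
    lia
  rw [two_mul]
  exact (Finset.card_le_card hcover).trans <| (Finset.card_union_le _ _).trans <|
    add_le_add (hH _ _) (hH _ _)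

variable [DecidableEq ι]

/-- The delays of the class `c` for which a crossing of that class falls into the window of length
`T` given by the edge and time step `a`. -/
def hittingDelays (ed : J → E) (cl : J → ι) (v : J → ℕ) (W T : ℕ) (a : E × ℕ) (c : ι) :
    Finset (Fin W) :=
  {y | ∃ j, ed j = a.1 ∧ cl j = c ∧ a.2 ≤ v j + y ∧ v j + y < a.2 + T}

-- A crossing hits a given time step `z` for at most one delay, and only if its undelayed time is
-- among the last `W` time steps up to `z`, which leaves `H` crossings for each of the `T` steps.
theorem WindowLE.card_delayed_mem_window_le {ed : J → E} {v : J → ℕ} {W H : ℕ}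
    (hH : WindowLE ed v W H) (T : ℕ) (a : E × ℕ) :
    #{q : J × Fin W | ed q.1 = a.1 ∧ a.2 ≤ v q.1 + q.2 ∧ v q.1 + q.2 < a.2 + T} ≤ H * T := by
  conv_rhs => rw [← Nat.add_sub_cancel_left a.2 T, ← Nat.card_Ico]
  refine Finset.card_le_mul_card_image_of_maps_to (f := fun q => v q.1 + (q.2 : ℕ))
    (fun q hq => Finset.mem_Ico.2 (Finset.mem_filter_univ _ |>.1 hq).2) H fun z _ => ?_
  refine (Finset.card_le_card_of_injOn Prod.fst (fun q hq => ?_) fun q hq q' hq' h => ?_).trans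
    (hH a.1 (z + 1 - W))
  · simp only [Finset.mem_coe, Finset.mem_filter, Finset.mem_univ, true_and] at hq ⊢
    lia
  · simp only [Finset.mem_coe, Finset.mem_filter, Finset.mem_univ, true_and] at hq hq'
    refine Prod.ext h (Fin.ext ?_)
    have := congrArg v h
    lia

theorem WindowLE.sum_card_hittingDelays_le [Fintype ι] {ed : J → E} {v : J → ℕ} {W H : ℕ}
    (hH : WindowLE ed v W H) (cl : J → ι) (T : ℕ) (a : E × ℕ) :
    ∑ c, #(hittingDelays ed cl v W T a c) ≤ H * T := by
  rw [← Finset.card_sigma]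
  refine (Finset.card_le_card_of_surjOn (fun q : J × Fin W => ⟨cl q.1, q.2⟩) ?_).trans
    (hH.card_delayed_mem_window_le T a)
  rintro ⟨c, y⟩ h
  simp only [Finset.coe_sigma, Set.mem_sigma_iff, Finset.mem_coe, hittingDelays,
    Finset.mem_filter_univ] at h
  obtain ⟨-, j, hed, rfl, hwin⟩ := h
  exact ⟨(j, y), by simpa using ⟨hed, hwin⟩, rfl⟩

/-- A set of windows containing every window that some class can hit along with the window `a`. -/
def windowNeighbors (ed : J → E) (cl : J → ι) (v : J → ℕ) (W T : ℕ) (a : E × ℕ) :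
    Finset (E × ℕ) :=
  ({j | a ∈ reachableWindows ed v W T j} : Finset J).biUnion fun j =>
    ({j' | cl j' = cl j} : Finset J).biUnion (reachableWindows ed v W T)

theorem card_windowNeighbors_le {ed : J → E} {cl : J → ι} {v : J → ℕ} {W T H B : ℕ} (hT : T ≤ W)
    (hH : WindowLE ed v W H) (hB : ∀ c, #{j | cl j = c} ≤ B) (a : E × ℕ) :
    #(windowNeighbors ed cl v W T a) ≤ 4 * H * B * W := by
  calc #(windowNeighbors ed cl v W T a)
      ≤ #{j | a ∈ reachableWindows ed v W T j} * (B * (2 * W)) :=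
        Finset.card_biUnion_le_card_mul _ _ _ fun j _ =>
          (Finset.card_biUnion_le_card_mul _ _ _ fun j' _ =>
            card_reachableWindows_le ed v hT j').trans (Nat.mul_le_mul_right _ (hB _))
    _ ≤ 2 * H * (B * (2 * W)) :=
        Nat.mul_le_mul_right _ (hH.card_mem_reachableWindows_le hT a)
    _ = 4 * H * B * W := by ring

theorem hittingDelays_eq_empty_or_of_notMem {ed : J → E} {cl : J → ι} {v : J → ℕ} {W T : ℕ}
    {a b : E × ℕ} (hb : b ∉ windowNeighbors ed cl v W T a) (c : ι) :
    hittingDelays ed cl v W T a c = ∅ ∨ hittingDelays ed cl v W T b c = ∅ := by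
  contrapose! hb
  obtain ⟨⟨y, hy⟩, ⟨y', hy'⟩⟩ := hb
  obtain ⟨j, hj, hjc, hjy⟩ := (Finset.mem_filter_univ _).1 hy
  obtain ⟨j', hj', hjc', hjy'⟩ := (Finset.mem_filter_univ _).1 hy'
  simp only [windowNeighbors, Finset.mem_biUnion, Finset.mem_filter_univ, mem_reachableWindows]
  exact ⟨j, ⟨hj, by lia, by lia⟩, j', hjc'.trans hjc.symm, hj', by lia, by lia⟩

theorem card_window_le_card_mem_hittingDelays [Fintype ι] {ed : J → E} {cl : J → ι}
    (hinj : Function.Injective fun j => (cl j, ed j)) (v : J → ℕ) {W : ℕ} (δ : ι → Fin W)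
    (T : ℕ) (a : E × ℕ) :
    #{j | ed j = a.1 ∧ a.2 ≤ v j + δ (cl j) ∧ v j + δ (cl j) < a.2 + T} ≤
      #{c | δ c ∈ hittingDelays ed cl v W T a c} := by
  refine Finset.card_le_card_of_injOn cl (fun j hj => ?_) fun j hj j' hj' h => ?_
  · simp only [Finset.mem_coe, Finset.mem_filter_univ, hittingDelays] at hj ⊢
    exact ⟨j, hj.1, rfl, hj.2⟩
  · simp only [Finset.mem_coe, Finset.mem_filter_univ] at hj hj'
    exact hinj (Prod.ext h (hj.1.trans hj'.1.symm))

theorem exists_delays [Finite ι] {ed : J → E} {cl : J → ι} {v : J → ℕ} {W T H B m : ℕ}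
    [NeZero W] (hT : T ≤ W) (hinj : Function.Injective fun j => (cl j, ed j))
    (hB : ∀ c, #{j | cl j = c} ≤ B) (hH : WindowLE ed v W H) {t : ℝ} (ht : 0 ≤ t)
    (hexp : 4 * Real.exp ((Real.exp t - 1) * (T * H / W) - t * m) * (4 * H * B * W + 1) ≤ 1) :
    ∃ δ : ι → Fin W, WindowLE ed (fun j => v j + δ (cl j)) T m := by
  have := Fintype.ofFinite ι
  have hW : (W : ℝ) ≠ 0 := NeZero.ne _
  obtain ⟨δ, hδ⟩ := exists_forall_card_mem_lt (D := hittingDelays ed cl v W T)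
    (r := m) (Λ := T * H / W)
    (card_windowNeighbors_le hT hH hB) (fun _ _ => hittingDelays_eq_empty_or_of_notMem) ht
    (fun a => by
      rw [Fintype.card_fin, div_mul_cancel₀ _ hW, mul_comm (T : ℝ)]
      exact_mod_cast hH.sum_card_hittingDelays_le cl T a)
    (by exact_mod_cast hexp) (Finset.univ.biUnion (reachableWindows ed v W T))
  refine ⟨δ, fun e s => ?_⟩
  by_cases hes : (e, s) ∈ Finset.univ.biUnion (reachableWindows ed v W T)
  · exact (card_window_le_card_mem_hittingDelays hinj v δ T (e, s)).trans
      (by exact_mod_cast (hδ _ hes).le)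
  · rw [Finset.filter_false_of_mem]
    · exact m.zero_le
    intro j _ hj
    refine hes (Finset.mem_biUnion.2 ⟨j, Finset.mem_univ j, mem_reachableWindows.2 ?_⟩)
    have := (δ (cl j)).isLt
    lia

end Delays

/-! ### Refining a schedule to shorter windows -/

section Numerics

theorem exp_inv_sub_one_mul_sub_le {y : ℝ} (hy : 16 ≤ y) :
    (Real.exp (1 / y) - 1) * (y ^ 4 + 2 * y ^ 3) - 1 / y * (y ^ 4 + 4 * y ^ 3) ≤ -(14 * y) := by
  have hy0 : 0 < y := by linarith
  have hexp : Real.exp (1 / y) - 1 ≤ 1 / y + (1 / y) ^ 2 := by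
    have habs : |1 / y| ≤ 1 := by
      rw [abs_of_pos (by positivity), div_le_one hy0]
      linarith
    linarith [le_of_abs_le (Real.abs_exp_sub_one_sub_id_le habs)]
  calc (Real.exp (1 / y) - 1) * (y ^ 4 + 2 * y ^ 3) - 1 / y * (y ^ 4 + 4 * y ^ 3)
      ≤ (1 / y + (1 / y) ^ 2) * (y ^ 4 + 2 * y ^ 3) - 1 / y * (y ^ 4 + 4 * y ^ 3) := by gcongr
    _ = 2 * y - y ^ 2 := by field_simp; ring
    _ ≤ -(14 * y) := by nlinarith

theorem pow_sixteen_le_exp {y : ℝ} (hy : 16 ≤ y) : 2 ^ 22 * y ^ 16 ≤ Real.exp (14 * y) := by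
  have hexp : y ^ 2 / 2 ≤ Real.exp y := by
    linarith [Real.quadratic_le_exp_of_nonneg (x := y) (by linarith)]
  calc 2 ^ 22 * y ^ 16 ≤ 16 ^ 12 / 2 ^ 14 * y ^ 16 := by gcongr; norm_num
    _ ≤ y ^ 12 / 2 ^ 14 * y ^ 16 := by gcongr
    _ = (y ^ 2 / 2) ^ 14 := by ring
    _ ≤ Real.exp y ^ 14 := by gcongr
    _ = Real.exp (14 * y) := by rw [← Real.exp_nat_mul]; norm_num

theorem exp_mul_windowNeighbors_le_one {y : ℝ} (hy : 16 ≤ y) {W H B : ℝ}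
    (hW : W = (2 * y) ^ 4) (hH : H = W + 4 * (2 * y) ^ 3) (hB : B = W ^ 2) :
    4 * Real.exp ((Real.exp (1 / y) - 1) * (y ^ 4 * H / W) - 1 / y * (y ^ 4 + 4 * y ^ 3)) *
      (4 * H * B * W + 1) ≤ 1 := by
  have hmean : y ^ 4 * H / W = y ^ 4 + 2 * y ^ 3 := by
    rw [hH, hW]
    field_simp
    ring
  have hcard : 4 * (4 * H * B * W + 1) ≤ 2 ^ 22 * y ^ 16 := by
    have h16 : 1 ≤ y ^ 16 := one_le_pow₀ (by linarith)
    have h15 : 16 * y ^ 15 ≤ y ^ 16 := by rw [pow_succ' y 15]; gcongr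
    rw [hB, hH, hW]
    ring_nf
    linarith
  rw [hmean]
  calc _ = 4 * (4 * H * B * W + 1) * Real.exp _ := by ring
    _ ≤ Real.exp (14 * y) * Real.exp (-(14 * y)) := by
        gcongr
        · exact hcard.trans (pow_sixteen_le_exp hy)
        · exact exp_inv_sub_one_mul_sub_le hy
    _ = 1 := by rw [← Real.exp_add, add_neg_cancel, Real.exp_zero]

end Numerics

/-- The map on time steps that opens a gap of length `W` after each block of `W ^ 2` steps. -/
def stretch (W u : ℕ) : ℕ :=
  u + u / W ^ 2 * W

theorem stretch_add_sub_le (W : ℕ) {a b : ℕ} (h : a ≤ b) :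
    stretch W a + (b - a) ≤ stretch W b := by
  have := Nat.mul_le_mul_right W (Nat.div_le_div_right (c := W ^ 2) h)
  simp only [stretch]
  lia

theorem stretch_mono (W : ℕ) : Monotone (stretch W) :=
  fun _ _ h => le_self_add.trans (stretch_add_sub_le W h)

theorem cast_stretch_le (W M : ℕ) : (stretch W M : ℝ) ≤ M + M / W := by
  obtain rfl | hW := W.eq_zero_or_pos
  · simp [stretch]
  have hdiv : ((M / W ^ 2 : ℕ) : ℝ) * W ≤ M / W := by
    calc ((M / W ^ 2 : ℕ) : ℝ) * W ≤ M / (W ^ 2 : ℕ) * W := by gcongr; exact Nat.cast_div_le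
      _ = M / W := by push_cast; field_simp
  push_cast [stretch]
  linarith

theorem stretch_add_lt_stretch_add {W a b d d' : ℕ} (hab : a < b) (hd : d < W)
    (hd' : a / W ^ 2 = b / W ^ 2 → d = d') : stretch W a + d < stretch W b + d' := by
  by_cases hblock : a / W ^ 2 = b / W ^ 2
  · have := stretch_add_sub_le W hab.le
    have := hd' hblock
    lia
  · have hlt : a / W ^ 2 < b / W ^ 2 := (Nat.div_le_div_right hab.le).lt_of_ne hblock
    have hgap := Nat.mul_le_mul_right W (Nat.succ_le_of_lt hlt)
    rw [Nat.succ_mul] at hgap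
    simp only [stretch]
    lia

theorem WindowLE.comp {J E : Type*} [Fintype J] [DecidableEq E] {ed : J → E} {τ : J → ℕ}
    {s c : ℕ} (h : WindowLE ed τ s c) {g : ℕ → ℕ} (hg : ∀ ⦃a b⦄, a ≤ b → g a + (b - a) ≤ g b) :
    WindowLE ed (fun j => g (τ j)) s c := by
  intro e t
  obtain hempty | hne := Finset.eq_empty_or_nonempty
    ({j | ed j = e ∧ t ≤ g (τ j) ∧ g (τ j) < t + s} : Finset J)
  · simp [hempty]
  obtain ⟨a, ha, hmin⟩ := Finset.exists_min_image _ τ hne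
  refine (Finset.card_le_card fun j hj => ?_).trans (h e (τ a))
  have hexp := hg (hmin j hj)
  simp only [Finset.mem_filter_univ] at ha hj ⊢
  exact ⟨hj.1, hmin j (by simpa using hj), by lia⟩

section Refinement

variable {K E : Type*} {α : K → Type*} [Fintype K] [∀ i, Fintype (α i)] [∀ i, LinearOrder (α i)]
  [DecidableEq E]

theorem card_block_le {τ : (Σ i, α i) → ℕ} (hτ : StrictMono τ) {B : ℕ} (hB : 0 < B) (i : K)
    (b : ℕ) [DecidableEq K] : #{j : Σ i, α i | j.1 = i ∧ τ j / B = b} ≤ B := by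
  have hinj : ∀ i, Function.Injective fun p => τ ⟨i, p⟩ := fun i =>
    StrictMono.injective fun _ _ hp => hτ (Sigma.mk_lt_mk_iff.2 hp)
  calc _ ≤ #(Finset.Ico (b * B) ((b + 1) * B)) := by
        refine Finset.card_le_card_of_injOn τ (fun j hj => ?_) fun j hj j' hj' h => ?_
        · obtain ⟨-, rfl⟩ := (Finset.mem_filter_univ _).1 hj
          exact Finset.mem_coe.2 <| Finset.mem_Ico.2
            ⟨Nat.div_mul_le_self _ _, by rw [mul_comm]; exact Nat.lt_mul_div_succ _ hB⟩
        · obtain ⟨i', p⟩ := j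
          obtain ⟨i'', p'⟩ := j'
          obtain rfl : i' = i := ((Finset.mem_filter_univ _).1 hj).1
          obtain rfl : i'' = i' := ((Finset.mem_filter_univ _).1 hj').1
          rw [hinj _ h]
    _ = B := by rw [Nat.card_Ico, Nat.succ_mul, Nat.add_sub_cancel_left]

/-- Every window of `y ^ 4` time steps contains at most `1 + 4 / y` crossings of each edge per time
step. The windows have length `y ^ 4` because halving `y` then keeps the lengths integral while
the excess `4 / y` doubles. -/
def IsSpread {J : Type*} [Fintype J] (ed : J → E) (τ : J → ℕ) (y : ℕ) : Prop :=
  WindowLE ed τ (y ^ 4) (y ^ 4 + 4 * y ^ 3)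

theorem IsSpread.exists_halving {ed : (Σ i, α i) → E}
    (hed : ∀ i, Function.Injective fun p => ed ⟨i, p⟩) {τ : (Σ i, α i) → ℕ} (hτ : StrictMono τ)
    {M y : ℕ} (hM : ∀ j, τ j < M) (hy : 16 ≤ y) (h : IsSpread ed τ (2 * y)) :
    ∃ τ' : (Σ i, α i) → ℕ, StrictMono τ' ∧
      (∀ j, τ' j < stretch ((2 * y) ^ 4) M + (2 * y) ^ 4) ∧ IsSpread ed τ' y := by
  classical
  set W := (2 * y) ^ 4
  have : NeZero W := ⟨by positivity⟩
  let cl : (Σ i, α i) → K × Fin M :=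
    fun j => (j.1, ⟨τ j / W ^ 2, (Nat.div_le_self _ _).trans_lt (hM j)⟩)
  have hinj : Function.Injective fun j => (cl j, ed j) := by
    rintro ⟨i, p⟩ ⟨i', p'⟩ hj
    simp only [cl, Prod.mk.injEq] at hj
    obtain ⟨⟨rfl, -⟩, hp⟩ := hj
    rw [hed i hp]
  have hblock : ∀ c, #{j | cl j = c} ≤ W ^ 2 := fun ⟨i, b⟩ => by
    simpa only [cl, Prod.mk.injEq, Fin.ext_iff] using
      card_block_le hτ (pow_pos (NeZero.pos W) 2) i b
  have hnum := exp_mul_windowNeighbors_le_one (y := y) (by exact_mod_cast hy) rfl rfl rfl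
  obtain ⟨δ, hδ⟩ := exists_delays (T := y ^ 4) (m := y ^ 4 + 4 * y ^ 3) (t := 1 / y)
    (Nat.pow_le_pow_left (Nat.le_mul_of_pos_left y two_pos) 4) hinj hblock
    (h.comp fun _ _ => stretch_add_sub_le W) (by positivity) (by push_cast [W]; exact hnum)
  refine ⟨_, ?_, fun j => ?_, hδ⟩
  · rintro _ _ ⟨i, p, p', hp⟩
    refine stretch_add_lt_stretch_add (hτ (Sigma.mk_lt_mk_iff.2 hp)) (δ _).isLt fun hb => ?_
    simp only [cl, hb]
  · exact add_lt_add_of_le_of_lt (stretch_mono W (hM j).le) (δ _).isLt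

-- The factor `2 - 1 / V` absorbs the relative slowdowns `1 + 1 / W` of all halvings, since these
-- form a geometric series.
theorem slowdown_mul_add_le {M M' V : ℝ} (hM : 0 ≤ M) (hV : 1 ≤ V)
    (hM' : M' ≤ M + M / (16 * V) + 16 * V) :
    (2 - 1 / V) * (M' + 2 * V) ≤ (2 - 1 / (16 * V)) * (M + 2 * (16 * V)) := by
  set u := 1 / (16 * V)
  have hu : 0 ≤ u := by positivity
  have hVu : 16 * V * u = 1 := by simp only [u]; field_simp
  have hV' : 1 / V = 16 * u := by simp only [u]; field_simp
  have hV1 : 1 / V ≤ 1 := by rw [div_le_one (by linarith)]; exact hV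
  have hstep : M' + 2 * V ≤ (1 + u) * (M + 2 * (16 * V)) := by
    rw [div_eq_mul_one_div] at hM'
    linarith
  calc (2 - 1 / V) * (M' + 2 * V) ≤ (2 - 1 / V) * ((1 + u) * (M + 2 * (16 * V))) := by
        gcongr
        linarith
    _ = (2 - 16 * u) * (1 + u) * (M + 2 * (16 * V)) := by rw [hV', mul_assoc]
    _ ≤ (2 - u) * (M + 2 * (16 * V)) := by
        gcongr
        nlinarith

theorem IsSpread.exists_sixteen {ed : (Σ i, α i) → E}
    (hed : ∀ i, Function.Injective fun p => ed ⟨i, p⟩) (k : ℕ) {τ : (Σ i, α i) → ℕ}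
    (hτ : StrictMono τ) {M : ℕ} (hM : ∀ j, τ j < M) (h : IsSpread ed τ (2 ^ k * 16)) :
    ∃ τ' : (Σ i, α i) → ℕ, StrictMono τ' ∧
      (∀ j, (τ' j : ℝ) < (2 - 1 / (2 ^ k * 16) ^ 4) * (M + 2 * (2 ^ k * 16) ^ 4)) ∧
      IsSpread ed τ' 16 := by
  induction k generalizing τ M with
  | zero =>
    refine ⟨τ, hτ, fun j => ?_, by simpa using h⟩
    have : (τ j : ℝ) < M := by exact_mod_cast hM j
    norm_num
    linarith
  | succ k ih =>
    rw [pow_succ', mul_assoc] at h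
    obtain ⟨τ₁, hτ₁, hM₁, h₁⟩ :=
      h.exists_halving hed hτ hM (Nat.le_mul_of_pos_left _ (by positivity))
    obtain ⟨τ₂, hτ₂, hM₂, h₂⟩ := ih hτ₁ hM₁ h₁
    refine ⟨τ₂, hτ₂, fun j => (hM₂ j).trans_le ?_, h₂⟩
    rw [show ((2 : ℝ) ^ (k + 1) * 16) ^ 4 = 16 * (2 ^ k * 16) ^ 4 by ring]
    have hV : (((2 * (2 ^ k * 16)) ^ 4 : ℕ) : ℝ) = 16 * (2 ^ k * 16) ^ 4 := by push_cast; ring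
    refine slowdown_mul_add_le M.cast_nonneg (one_le_pow₀ ?_) ?_
    · linarith [one_le_pow₀ (one_le_two (α := ℝ)) (n := k)]
    · have := cast_stretch_le ((2 * (2 ^ k * 16)) ^ 4) M
      rw [hV] at this
      rw [Nat.cast_add, hV]
      linarith

end Refinement

theorem exists_injective_prodMk_of_card_fiber_le {J β : Type*} [Fintype J] [DecidableEq β]
    {f : J → β} {L : ℕ} (hf : ∀ b, #{j | f j = b} ≤ L) :
    ∃ r : J → Fin L, Function.Injective fun j => (f j, r j) := by
  let g : ∀ b, {j // f j = b} ↪ Fin L := fun b => Classical.choice <|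
    Function.Embedding.nonempty_of_card_le (by simpa [Fintype.card_subtype] using hf b)
  have hg : Function.Injective (Sigma.map id fun b => g b : (Σ b, {j // f j = b}) → Σ _, Fin L) :=
    Function.injective_id.sigma_map fun b => (g b).injective
  exact ⟨fun j => g (f j) ⟨j, rfl⟩, (Equiv.sigmaEquivProd β (Fin L)).injective.comp <|
    hg.comp (Equiv.sigmaFiberEquiv f).symm.injective⟩

-- Every time step is replaced by `L` steps, in which the crossings of an edge take turns.
theorem WindowLE.exists_injective {J E : Type*} [Fintype J] [Preorder J] [DecidableEq E]
    {ed : J → E} {τ : J → ℕ} {s L M : ℕ} (h : WindowLE ed τ s L) (hs : 0 < s)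
    (hτ : StrictMono τ) (hM : ∀ j, τ j < M) :
    ∃ τ' : J → ℕ, StrictMono τ' ∧ (∀ j, τ' j < L * M) ∧
      Function.Injective fun j => (ed j, τ' j) := by
  obtain ⟨r, hr⟩ := exists_injective_prodMk_of_card_fiber_le (f := fun j => (ed j, τ j))
    (L := L) fun ⟨e, t⟩ => (Finset.card_le_card fun j hj => by
      simp only [Finset.mem_filter_univ, Prod.mk.injEq] at hj ⊢
      lia).trans (h e t)
  have hlt : ∀ {j a}, τ j < a → L * τ j + r j < L * a := fun {j a} hja => by
    nlinarith [(r j).isLt]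
  refine ⟨fun j => L * τ j + r j, fun j j' hj => (hlt (hτ hj)).trans_le le_self_add,
    fun j => hlt (hM j), fun j j' hj => ?_⟩
  obtain ⟨hed, hj⟩ := Prod.ext_iff.1 hj
  dsimp only at hed hj
  have hττ : τ j = τ j' := by
    obtain h | h | h := lt_trichotomy (τ j) (τ j')
    · have := hlt h; lia
    · exact h
    · have := hlt h; lia
  refine hr (Prod.ext (Prod.ext hed hττ) (Fin.ext ?_))
  rw [hττ] at hj
  exact Nat.add_left_cancel hj

theorem exists_injective_crossing_times {K E : Type*} [Fintype K] [DecidableEq E] {n : K → ℕ}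
    {ed : (Σ i, Fin (n i)) → E} (hed : ∀ i, Function.Injective fun p => ed ⟨i, p⟩) {C D : ℕ}
    (hC : ∀ e, #{j | ed j = e} ≤ C) (hD : ∀ i, n i ≤ D) :
    ∃ τ : (Σ i, Fin (n i)) → ℕ, StrictMono τ ∧
      (∀ j, τ j < (16 ^ 4 + 4 * 16 ^ 3) * (6 * 16 ^ 4) * (C + D)) ∧
      Function.Injective fun j => (ed j, τ j) := by
  set k := Nat.log 16 (C + D)
  set W := (2 ^ k * 16) ^ 4 with hW
  have hWk : W = 16 ^ 4 * 16 ^ k := by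
    rw [hW, mul_pow, ← pow_mul, mul_comm k, pow_mul, mul_comm]
    norm_num
  have hCD : C + D ≤ W := by
    have := Nat.lt_pow_succ_log_self (b := 16) (by norm_num) (C + D)
    rw [hWk]
    lia
  have hinit : IsSpread ed (fun j => j.2) (2 ^ k * 16) := fun e t => by
    refine (Finset.card_le_card fun j hj => ?_).trans ((hC e).trans (by lia))
    simp only [Finset.mem_filter_univ] at hj ⊢
    exact hj.1
  obtain ⟨τ, hτ, hτW, hspread⟩ := hinit.exists_sixteen hed k (M := W)
    (by rintro _ _ ⟨i, p, p', hp⟩; exact hp)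
    fun j => j.2.isLt.trans_le ((hD j.1).trans (by lia))
  have hτ6 : ∀ j, τ j < 6 * W := fun j => by
    have : (τ j : ℝ) < 6 * W := by
      calc (τ j : ℝ) < (2 - 1 / W) * (W + 2 * W) := by simpa [hW] using hτW j
        _ ≤ 2 * (W + 2 * W) := by gcongr; exact sub_le_self _ (by positivity)
        _ = 6 * W := by ring
    exact_mod_cast this
  obtain ⟨τ', hτ', hlt, hinj⟩ := hspread.exists_injective (by norm_num) hτ hτ6
  refine ⟨τ', hτ', fun j => (hlt j).trans_le ?_, hinj⟩
  have hpos : C + D ≠ 0 := by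
    have := hD j.1
    have := j.2.isLt
    lia
  have := Nat.pow_log_le_self 16 hpos
  rw [hWk, mul_assoc]
  lia

/-! ### From crossing times to schedules -/

namespace RInst

variable {I : RInst}

/-- A crossing of the instance is a packet together with a position on its path. -/
abbrev Crossing (I : RInst) : Type :=
  Σ i : Fin I.k, Fin (I.path i).length

/-- The edge on which a crossing takes place. -/
def edge (j : I.Crossing) : I.E :=
  (I.path j.1).get j.2

/-- The schedule in which each crossing `j` takes place in time step `τ j + 1`, as the number of
positions traversed by time `t`. -/
def scheduleOf (τ : I.Crossing → ℕ) (i : Fin I.k) (t : ℕ) : ℕ :=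
  #{p | τ ⟨i, p⟩ < t}

theorem lt_scheduleOf_iff {τ : I.Crossing → ℕ} (hτ : StrictMono τ) {i : Fin I.k} {t p : ℕ}
    (hp : p < (I.path i).length) : p < scheduleOf τ i t ↔ τ ⟨i, p, hp⟩ < t :=
  Tuple.lt_card_lt_iff_apply_lt_of_monotone
    (f := fun p => τ ⟨i, p⟩) (j := ⟨p, hp⟩) (fun _ _ h => hτ.monotone (Sigma.mk_le_mk_iff.2 h))

theorem scheduleOf_le_length (τ : I.Crossing → ℕ) (i : Fin I.k) (t : ℕ) :
    scheduleOf τ i t ≤ (I.path i).length :=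
  (Finset.card_le_univ _).trans_eq (Fintype.card_fin _)

theorem isSchedule_scheduleOf {τ : I.Crossing → ℕ} (hτ : StrictMono τ) :
    I.IsSchedule (scheduleOf τ) := by
  refine ⟨fun i => by simp [scheduleOf], fun i t => ?_, scheduleOf_le_length τ⟩
  have hmono : scheduleOf τ i t ≤ scheduleOf τ i (t + 1) :=
    Finset.card_le_card <| Finset.monotone_filter_right _ fun p _ hp => Nat.lt_succ_of_lt hp
  have hstep : scheduleOf τ i (t + 1) ≤ scheduleOf τ i t + 1 := by
    by_contra! hlt
    have hlen := hlt.trans_le (scheduleOf_le_length τ i (t + 1))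
    have hlast := (lt_scheduleOf_iff hτ hlen).1 hlt
    have hprev := mt (lt_scheduleOf_iff hτ (Nat.lt_of_succ_lt hlen)).2 (lt_irrefl _)
    have := hτ (Sigma.mk_lt_mk_iff.2 (Fin.mk_lt_mk.2 (Nat.lt_succ_self (scheduleOf τ i t))) :
      (⟨i, _, Nat.lt_of_succ_lt hlen⟩ : I.Crossing) < ⟨i, _, hlen⟩)
    lia
  lia

theorem Crosses.exists_crossing {τ : I.Crossing → ℕ} (hτ : StrictMono τ) {i : Fin I.k} {e : I.E}
    {t : ℕ} (h : I.Crosses (scheduleOf τ) i e t) :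
    ∃ j : I.Crossing, j.1 = i ∧ edge j = e ∧ τ j = t := by
  obtain ⟨hcross, hedge⟩ := h
  obtain ⟨hlen, hedge⟩ := List.getElem?_eq_some_iff.1 hedge
  have hafter := (lt_scheduleOf_iff hτ (t := t + 1) hlen).1 (by lia)
  have hbefore := mt (lt_scheduleOf_iff hτ hlen).2 (lt_irrefl _)
  exact ⟨⟨i, _, hlen⟩, rfl, hedge, by lia⟩

theorem loadLE_one_scheduleOf {τ : I.Crossing → ℕ} (hτ : StrictMono τ)
    (hinj : Function.Injective fun j => (edge j, τ j)) : I.LoadLE (scheduleOf τ) 1 := by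
  intro e t
  rw [Finite.card_le_one_iff_subsingleton]
  refine ⟨fun ⟨i, hi⟩ ⟨i', hi'⟩ => Subtype.ext ?_⟩
  obtain ⟨j, rfl, hje, hjt⟩ := hi.exists_crossing hτ
  obtain ⟨j', rfl, hje', hjt'⟩ := hi'.exists_crossing hτ
  exact congrArg Sigma.fst (hinj (Prod.ext (hje.trans hje'.symm) (hjt.trans hjt'.symm)))

theorem completedBy_scheduleOf {τ : I.Crossing → ℕ} {T : ℕ} (hT : ∀ j, τ j < T) :
    I.CompletedBy (scheduleOf τ) T := by
  intro i
  simp [scheduleOf, hT]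

theorem edge_injective {i : Fin I.k} (hI : (I.path i).Nodup) :
    Function.Injective fun p => edge (⟨i, p⟩ : I.Crossing) :=
  List.nodup_iff_injective_get.1 hI

theorem length_path_le_dilation (i : Fin I.k) : (I.path i).length ≤ I.dilation :=
  Finset.le_sup (f := fun i => (I.path i).length) (Finset.mem_univ i)

theorem card_edge_eq_le_congestion [DecidableEq I.E] (hI : ∀ i, (I.path i).Nodup) (e : I.E) :
    #{j : I.Crossing | edge j = e} ≤ I.congestion := by
  calc #{j : I.Crossing | edge j = e} ≤ #{i : Fin I.k | e ∈ I.path i} := by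
        refine Finset.card_le_card_of_injOn Sigma.fst (fun j hj => ?_) ?_
        · obtain rfl := (Finset.mem_filter_univ _).1 hj
          exact (Finset.mem_filter_univ _).2 (List.get_mem _ _)
        · rintro ⟨i, p⟩ hj ⟨i', p'⟩ hj' h
          obtain rfl : i = i' := h
          have hp := ((Finset.mem_filter_univ _).1 hj).trans ((Finset.mem_filter_univ _).1 hj').symm
          rw [edge_injective (hI i) hp]
    _ = Nat.card {i : Fin I.k | e ∈ I.path i} := by
        rw [Set.coe_ofPred, Nat.card_eq_fintype_card, Fintype.card_subtype]
    _ ≤ I.congestion :=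
        Finset.le_sup (f := fun e => Nat.card {i : Fin I.k | e ∈ I.path i}) (Finset.mem_univ e)

end RInst

theorem exists_feasible_schedule_congestion_plus_dilation_general :
    ∃ c : ℕ, 1 ≤ c ∧ ∀ I : RInst, (∀ i, (I.path i).Nodup) →
      ∃ σ : Fin I.k → ℕ → ℕ, I.IsSchedule σ ∧ I.LoadLE σ 1 ∧
        I.CompletedBy σ (c * (I.congestion + I.dilation)) := by
  classical
  refine ⟨(16 ^ 4 + 4 * 16 ^ 3) * (6 * 16 ^ 4), by norm_num, fun I hI => ?_⟩
  obtain ⟨τ, hτ, hT, hinj⟩ := exists_injective_crossing_times (ed := RInst.edge (I := I))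
    (fun i => RInst.edge_injective (hI i)) (RInst.card_edge_eq_le_congestion hI)
    RInst.length_path_le_dilation
  exact ⟨RInst.scheduleOf τ, RInst.isSchedule_scheduleOf hτ, RInst.loadLE_one_scheduleOf hτ hinj,
    RInst.completedBy_scheduleOf hT⟩

/-- There is a universal constant `c ≥ 1` such that every routing
instance with congestion `C` and dilation `D` admits a feasible schedule
(load at most `1`) with makespan at most `c·(C+D)`. -/
theorem exists_feasible_schedule_congestion_plus_dilation :
    ∃ c : ℕ, 1 ≤ c ∧ ∀ I : RInst, I.Valid →
      ∃ σ : Fin I.k → ℕ → ℕ, I.IsSchedule σ ∧ I.LoadLE σ 1 ∧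
        I.CompletedBy σ (c * (I.congestion + I.dilation)) := by
  obtain ⟨c, hc, h⟩ := exists_feasible_schedule_congestion_plus_dilation_general
  exact ⟨c, hc, fun I hI => h I hI.2⟩
end

section
/- There exists a universal constant c such that every routing instance in which every path has exactly D edges and whose congestion is at most D admits a schedule with makespan at most c·D and load at most c in which, additionally, every packet waits at most one time unit at each intermediate vertex of its path: for each packet i and each position p with 0 < p < |Pᵢ|, there is at most one time step t with σᵢ(t) = σᵢ(t+1) = p. -/
namespace PacketRouting

open Finset
open scoped BigOperators

/-! ### The Lovász Local Lemma -/

section LocalLemma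

variable {ι : Type*} {α : ι → Type*} [Fintype ι] [DecidableEq ι] [∀ i, Fintype (α i)]

theorem card_inter_mul_card_univ_of_dependsOn [∀ i, DecidableEq (α i)] {A B : Finset (∀ i, α i)}
    {s : Finset ι} (hA : DependsOn (· ∈ A) (s : Set ι)) (hB : DependsOn (· ∈ B) (s : Set ι)ᶜ) :
    #(A ∩ B) * Fintype.card (∀ i, α i) = #A * #B := by
  have hA' (f g) : s.piecewise f g ∈ A ↔ f ∈ A := (hA fun i hi => by simp_all).to_iff
  have hB' (f g) : s.piecewise f g ∈ B ↔ g ∈ B := (hB fun i hi => by simp_all).to_iff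
  rw [← card_univ, ← card_product, ← card_product]
  -- exchanging the coordinates outside `s` maps `(A ∩ B) × Ω` onto `A × B`
  refine card_nbij' (fun x => (s.piecewise x.1 x.2, s.piecewise x.2 x.1))
    (fun x => (s.piecewise x.1 x.2, s.piecewise x.2 x.1)) ?_ ?_ ?_ ?_
  · simp +contextual [Set.MapsTo, hA', hB']
  · simp +contextual [Set.MapsTo, hA', hB']
  · exact fun x _ => by simp [piecewise_same]
  · exact fun x _ => by simp [piecewise_same]

theorem dens_inter_of_dependsOn [∀ i, Nonempty (α i)] [∀ i, DecidableEq (α i)]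
    {A B : Finset (∀ i, α i)} {s : Finset ι}
    (hA : DependsOn (· ∈ A) (s : Set ι)) (hB : DependsOn (· ∈ B) (s : Set ι)ᶜ) :
    (A ∩ B).dens = A.dens * B.dens := by
  have h : (#(A ∩ B) * Fintype.card (∀ i, α i) : ℚ≥0) = #A * #B := by
    exact_mod_cast card_inter_mul_card_univ_of_dependsOn hA hB
  simp only [dens]
  field_simp
  linear_combination h

section Avoid

variable {Ω X : Type*} [Fintype Ω] [DecidableEq Ω]

/-- The sample points at which none of the events `A x`, `x ∈ T`, happens. -/
def avoid (A : X → Finset Ω) (T : Finset X) : Finset Ω := (T.biUnion A)ᶜ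

theorem mem_avoid {A : X → Finset Ω} {T : Finset X} {ω : Ω} :
    ω ∈ avoid A T ↔ ∀ x ∈ T, ω ∉ A x := by
  simp [avoid]

theorem avoid_anti (A : X → Finset Ω) : Antitone (avoid A) :=
  fun _ _ h => compl_subset_compl.2 (biUnion_subset_biUnion_of_subset_left A h)

theorem card_avoid_le [DecidableEq X] (A : X → Finset Ω) (T T' : Finset X) :
    #(avoid A T') ≤ #(avoid A T) + ∑ y ∈ T \ T', #(A y ∩ avoid A T') := by
  have hcover : avoid A T' ⊆ avoid A T ∪ (T \ T').biUnion fun y => A y ∩ avoid A T' := by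
    intro ω hω
    by_cases hωT : ω ∈ avoid A T
    · exact mem_union_left _ hωT
    · simp only [mem_avoid, not_forall, not_not] at hωT
      obtain ⟨y, hy, hωy⟩ := hωT
      exact mem_union_right _ <| mem_biUnion.2 ⟨y, mem_sdiff.2
        ⟨hy, fun hy' => mem_avoid.1 hω y hy' hωy⟩, mem_inter.2 ⟨hωy, hω⟩⟩
  exact (card_le_card hcover).trans
    ((card_union_le _ _).trans (Nat.add_le_add_left card_biUnion_le _))

variable {A : X → Finset Ω} {S : Finset X} {Γ : X → Finset X} {d : ℝ}

theorem two_mul_card_inter_avoid_le (hd : 1 ≤ d) (hΓ : ∀ x ∈ S, #(Γ x) ≤ d)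
    (hA : ∀ x ∈ S, ∀ T ⊆ S, Disjoint T (Γ x) →
      4 * d * #(A x ∩ avoid A T) ≤ #(avoid A T))
    {T : Finset X} (hT : T ⊆ S) {x : X} (hx : x ∈ S) :
    2 * d * #(A x ∩ avoid A T) ≤ #(avoid A T) := by
  classical
  induction T using Finset.strongInduction generalizing x with
  | H T ih =>
    set T' := T \ Γ x
    have hT' : T' ⊆ T := sdiff_subset
    have hnear : #(T \ T') ≤ d := by
      refine le_trans (Nat.cast_le.2 (card_le_card fun y hy => ?_)) (hΓ x hx)
      by_contra hyΓ
      exact (mem_sdiff.1 hy).2 (mem_sdiff.2 ⟨(mem_sdiff.1 hy).1, hyΓ⟩)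
    have hfar := hA x hx T' (hT'.trans hT) sdiff_disjoint
    have hremoved : 2 * d * ∑ y ∈ T \ T', (#(A y ∩ avoid A T') : ℝ) ≤ d * #(avoid A T') := by
      calc 2 * d * ∑ y ∈ T \ T', (#(A y ∩ avoid A T') : ℝ)
          = ∑ y ∈ T \ T', 2 * d * #(A y ∩ avoid A T') := mul_sum ..
        _ ≤ ∑ _y ∈ T \ T', (#(avoid A T') : ℝ) := sum_le_sum fun y hy =>
            have hy := mem_sdiff.1 hy
            ih T' (hT'.ssubset_of_mem_notMem hy.1 hy.2) (hT'.trans hT) (hT hy.1)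
        _ ≤ d * #(avoid A T') := by
            rw [sum_const, nsmul_eq_mul]
            gcongr
    have hhalf : (#(avoid A T') : ℝ) ≤ 2 * #(avoid A T) := by
      have hcover : (#(avoid A T') : ℝ) ≤
          #(avoid A T) + ∑ y ∈ T \ T', (#(A y ∩ avoid A T') : ℝ) := by
        exact_mod_cast card_avoid_le A T T'
      nlinarith
    have hmono : (#(A x ∩ avoid A T) : ℝ) ≤ #(A x ∩ avoid A T') :=
      Nat.cast_le.2 (card_le_card (inter_subset_inter_left (avoid_anti A hT')))
    nlinarith

theorem exists_forall_notMem_of_four_mul_card_inter_avoid_le [Nonempty Ω] (hd : 1 ≤ d)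
    (hΓ : ∀ x ∈ S, #(Γ x) ≤ d)
    (hA : ∀ x ∈ S, ∀ T ⊆ S, Disjoint T (Γ x) →
      4 * d * #(A x ∩ avoid A T) ≤ #(avoid A T)) :
    ∃ ω, ∀ x ∈ S, ω ∉ A x := by
  classical
  suffices h : ∀ T ⊆ S, 0 < #(avoid A T) by
    obtain ⟨ω, hω⟩ := card_pos.1 (h S subset_rfl)
    exact ⟨ω, mem_avoid.1 hω⟩
  intro T
  induction T using Finset.induction_on with
  | empty => simp [avoid, Fintype.card_pos]
  | insert x T _ ih =>
    intro hT
    obtain ⟨hx, hT⟩ := insert_subset_iff.1 hT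
    have hpos : (0 : ℝ) < #(avoid A T) := Nat.cast_pos.2 (ih hT)
    have hx : 2 * d * (#(A x ∩ avoid A T) : ℝ) ≤ #(avoid A T) :=
      two_mul_card_inter_avoid_le hd hΓ hA hT hx
    have hsplit : (#(avoid A T) : ℝ) ≤ #(avoid A (insert x T)) + #(A x ∩ avoid A T) := by
      have hsub : insert x T \ T ⊆ {x} := by grind
      exact_mod_cast (card_avoid_le A (insert x T) T).trans
        (Nat.add_le_add_left ((sum_le_sum_of_subset hsub).trans (sum_singleton _ _).le) _)
    have : (0 : ℝ) < #(avoid A (insert x T)) := by nlinarith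
    exact_mod_cast this

end Avoid

theorem lovasz_local_lemma [∀ i, Nonempty (α i)] {X : Type*}
    {A : X → Finset (∀ i, α i)} {vbl : X → Finset ι} {S : Finset X} {d : ℝ}
    (hdep : ∀ x, DependsOn (· ∈ A x) (vbl x : Set ι)) (hd : 1 ≤ d)
    (hdeg : ∀ x ∈ S, #{y ∈ S | ¬ Disjoint (vbl x) (vbl y)} ≤ d)
    (hA : ∀ x ∈ S, 4 * d * (A x).dens ≤ 1) :
    ∃ ω, ∀ x ∈ S, ω ∉ A x := by
  classical
  refine exists_forall_notMem_of_four_mul_card_inter_avoid_le hd hdeg fun x hx T hT hTx => ?_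
  have havoid : DependsOn (· ∈ avoid A T) (vbl x : Set ι)ᶜ := by
    intro ω ω' h
    simp only [mem_avoid]
    refine propext (forall₂_congr fun y hy => not_congr (hdep y fun i hi => h i ?_).to_iff)
    have hxy : Disjoint (vbl x) (vbl y) := by
      by_contra hxy
      exact disjoint_left.1 hTx hy (mem_filter.2 ⟨hT hy, hxy⟩)
    exact disjoint_right.1 hxy hi
  have hdens : ((A x ∩ avoid A T).dens : ℝ) = (A x).dens * (avoid A T).dens := by
    exact_mod_cast dens_inter_of_dependsOn (hdep x) havoid
  calc 4 * d * (#(A x ∩ avoid A T) : ℝ)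
      = 4 * d * (A x).dens * #(avoid A T) := by
        rw [← nnratCast_dens_mul_natCast_card, hdens, ← nnratCast_dens_mul_natCast_card (avoid A T)]
        ring
    _ ≤ #(avoid A T) := mul_le_of_le_one_left (Nat.cast_nonneg _) (hA x hx)

end LocalLemma

/-! ### Chernoff bound -/

section Concentration

theorem expect_apply {ι α : Type*} [Fintype ι] [DecidableEq ι] [Fintype α] [Nonempty α]
    (i : ι) (H : α → ℝ) : 𝔼 f : ι → α, H (f i) = 𝔼 x, H x :=
  calc 𝔼 f : ι → α, H (f i)
      = 𝔼 p : α × ({j // j ≠ i} → α), H p.1 :=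
        Fintype.expect_equiv (Equiv.funSplitAt i α) _ _ fun _ => rfl
    _ = 𝔼 x, H x := by simp only [← univ_product_univ, expect_product, Fintype.expect_const]

theorem expect_apply_apply {ι α : Type*} [Fintype ι] [DecidableEq ι] [Fintype α] [Nonempty α]
    {i j : ι} (hij : i ≠ j) (H : α × α → ℝ) :
    𝔼 f : ι → α, H (f i, f j) = 𝔼 x, H x :=
  calc 𝔼 f : ι → α, H (f i, f j)
      = 𝔼 p : α × ({k // k ≠ i} → α), H (p.1, p.2 ⟨j, hij.symm⟩) :=
        Fintype.expect_equiv (Equiv.funSplitAt i α) _ _ fun _ => rfl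
    _ = 𝔼 x, H x := by
        simp only [← univ_product_univ, expect_product]
        exact expect_congr rfl fun x _ =>
          expect_apply (⟨j, hij.symm⟩ : {k // k ≠ i}) fun y => H (x, y)

variable {ι : Type*} {α : ι → Type*} [Fintype ι] [DecidableEq ι] [∀ i, Fintype (α i)]

theorem expect_prod_apply (g : ∀ i, α i → ℝ) :
    𝔼 f : ∀ i, α i, ∏ i, g i (f i) = ∏ i, 𝔼 x, g i x := by
  simp only [Fintype.expect_eq_sum_div_card, prod_div_distrib, prod_univ_sum,
    Fintype.piFinset_univ, Fintype.card_pi, Nat.cast_prod]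

theorem dens_filter_lt_le_expect_exp {Ω : Type*} [Fintype Ω] (X : Ω → ℝ) (a : ℝ) {l : ℝ}
    (hl : 0 ≤ l) : (dens {ω | a < X ω} : ℝ) ≤ 𝔼 ω, Real.exp (l * (X ω - a)) := by
  classical
  rw [← expect_indicator_one]
  refine expect_le_expect fun ω _ => ?_
  by_cases h : a < X ω
  · simpa [h] using mul_nonneg hl (sub_nonneg.2 h.le)
  · simpa [h] using (Real.exp_pos _).le

theorem expect_exp_le {β : Type*} [Fintype β] [Nonempty β] {q : β → ℝ} {l m : ℝ} (hl : 0 ≤ l)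
    (hlm : l * m ≤ 1) (hq0 : ∀ x, 0 ≤ q x) (hqm : ∀ x, q x ≤ m) :
    𝔼 x, Real.exp (l * q x) ≤ Real.exp ((l + l ^ 2 * m) * 𝔼 x, q x) := by
  have hpoint (x : β) : Real.exp (l * q x) ≤ (l + l ^ 2 * m) * q x + 1 := by
    have hlq : |l * q x| ≤ 1 := by
      rw [abs_of_nonneg (mul_nonneg hl (hq0 x))]
      exact (mul_le_mul_of_nonneg_left (hqm x) hl).trans hlm
    have hexp := (abs_le.1 (Real.abs_exp_sub_one_sub_id_le hlq)).2
    have hsq : l ^ 2 * (q x * q x) ≤ l ^ 2 * (m * q x) := by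
      gcongr
      exacts [hq0 x, hqm x]
    linarith
  calc 𝔼 x, Real.exp (l * q x)
      ≤ 𝔼 x, ((l + l ^ 2 * m) * q x + 1) := expect_le_expect fun x _ => hpoint x
    _ = (l + l ^ 2 * m) * 𝔼 x, q x + 1 := by
        rw [expect_add_distrib, ← mul_expect, Fintype.expect_const]
    _ ≤ Real.exp ((l + l ^ 2 * m) * 𝔼 x, q x) := Real.add_one_le_exp _

theorem dens_filter_add_lt_sum_le [∀ i, Nonempty (α i)] {q : ∀ i, α i → ℝ} {m μ ε : ℝ}
    (hm : 0 < m) (hμ : 0 < μ) (hε : 0 ≤ ε) (hεμ : ε ≤ 2 * μ) (hq0 : ∀ i x, 0 ≤ q i x)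
    (hqm : ∀ i x, q i x ≤ m) (hmean : ∑ i, 𝔼 x, q i x ≤ μ) :
    (dens {f : ∀ i, α i | μ + ε < ∑ i, q i (f i)} : ℝ) ≤ Real.exp (-(ε ^ 2 / (4 * m * μ))) := by
  set l := ε / (2 * m * μ) with hl
  have hl0 : 0 ≤ l := by positivity
  have hlm : l * m ≤ 1 := by
    have : l * m = ε / (2 * μ) := by rw [hl]; field_simp
    rw [this]
    exact div_le_one_of_le₀ hεμ (by positivity)
  calc (dens {f : ∀ i, α i | μ + ε < ∑ i, q i (f i)} : ℝ)
      ≤ 𝔼 f : ∀ i, α i, Real.exp (l * (∑ i, q i (f i) - (μ + ε))) :=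
        dens_filter_lt_le_expect_exp _ _ hl0
    _ = Real.exp (-(l * (μ + ε))) * ∏ i, 𝔼 x, Real.exp (l * q i x) := by
        rw [← expect_prod_apply, mul_expect]
        refine expect_congr rfl fun f _ => ?_
        rw [← Real.exp_sum, ← Real.exp_add, ← mul_sum]
        ring_nf
    _ ≤ Real.exp (-(l * (μ + ε))) * ∏ i, Real.exp ((l + l ^ 2 * m) * 𝔼 x, q i x) := by
        gcongr with i
        exact expect_exp_le hl0 hlm (hq0 i) (hqm i)
    _ = Real.exp (-(l * (μ + ε)) + (l + l ^ 2 * m) * ∑ i, 𝔼 x, q i x) := by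
        rw [← Real.exp_sum, ← Real.exp_add, ← mul_sum]
    _ ≤ Real.exp (-(l * (μ + ε)) + (l + l ^ 2 * m) * μ) := by gcongr
    _ = Real.exp (-(ε ^ 2 / (4 * m * μ))) := by
        congr 1
        rw [hl]
        field_simp
        ring

end Concentration

section Derandomization

variable {X K B α : Type*} [Fintype K] [Fintype B] [Fintype α] [Nonempty α]
  {S : Finset X} {q : X → K → (B → α) → ℝ} {m μ ε d : ℝ}

theorem card_filter_not_disjoint_le {ι : Type*} [DecidableEq ι]
    {vbl : X → Finset ι} {n : ℕ} (h : ∀ v, #{y ∈ S | v ∈ vbl y} ≤ n) (x : X) :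
    #{y ∈ S | ¬ Disjoint (vbl x) (vbl y)} ≤ #(vbl x) * n := by
  classical
  refine (card_le_card fun y hy => ?_).trans
    (card_biUnion_le_card_mul (vbl x) (fun v => {y ∈ S | v ∈ vbl y}) n fun v _ => h v)
  obtain ⟨hyS, hy⟩ := mem_filter.1 hy
  obtain ⟨v, hvx, hvy⟩ := not_disjoint_iff.1 hy
  exact mem_biUnion.2 ⟨v, hvx, mem_filter.2 ⟨hyS, hvy⟩⟩

theorem exists_forall_sum_le [DecidableEq K] [DecidableEq B] {vbl : X → Finset (K × B)}
    (hm : 0 < m) (hμ : 0 < μ) (hε : 0 ≤ ε) (hεμ : ε ≤ 2 * μ) (hd : 1 ≤ d)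
    (hdep : ∀ x i, DependsOn (q x i) {b | (i, b) ∈ vbl x})
    (hq0 : ∀ x i a, 0 ≤ q x i a) (hqm : ∀ x i a, q x i a ≤ m)
    (hmean : ∀ x ∈ S, ∑ i, 𝔼 a, q x i a ≤ μ)
    (hdeg : ∀ x ∈ S, #{y ∈ S | ¬ Disjoint (vbl x) (vbl y)} ≤ d)
    (hfail : 4 * d * Real.exp (-(ε ^ 2 / (4 * m * μ))) ≤ 1) :
    ∃ ω : K → B → α, ∀ x ∈ S, ∑ i, q x i (ω i) ≤ μ + ε := by
  classical
  let A (x : X) : Finset (K × B → α) := {ω | μ + ε < ∑ i, q x i (ω.curry i)}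
  have hdens (x : X) : (A x).dens = dens {ω : K → B → α | μ + ε < ∑ i, q x i (ω i)} := by
    rw [← dens_map_equiv (Equiv.curry K B α)]
    congr 1
    ext ω
    simp [A, Equiv.curry]
  obtain ⟨ω, hω⟩ : ∃ ω, ∀ x ∈ S, ω ∉ A x := by
    refine lovasz_local_lemma (vbl := vbl) (fun x ω ω' h => ?_) hd hdeg fun x hx => ?_
    · have hsum : ∑ i, q x i (ω.curry i) = ∑ i, q x i (ω'.curry i) :=
        sum_congr rfl fun i _ => hdep x i fun b hb => h (i, b) hb
      simp [A, hsum]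
    · refine le_trans ?_ hfail
      rw [hdens]
      gcongr
      exact dens_filter_add_lt_sum_le hm hμ hε hεμ (hq0 x) (hqm x) (hmean x hx)
  exact ⟨ω.curry, fun x hx => by simpa [A] using hω x hx⟩

end Derandomization

/-! ### Laws of random delays -/

/-- Probability distributions on `ℤ` that are supported in a window of `R` consecutive integers;
`g s` is the probability that the delay is `s`. -/
structure IsDelayLaw (g : ℤ → ℝ) (R : ℕ) : Prop where
  nonneg (s : ℤ) : 0 ≤ g s
  hasSum : HasSum g 1
  exists_support_subset : ∃ c : ℤ, Function.support g ⊆ Set.Ico c (c + R)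

namespace IsDelayLaw

variable {g : ℤ → ℝ} {R : ℕ} {X : Type*}

theorem sum_comp_le_one (h : IsDelayLaw g R) {f : X → ℤ} {s : Finset X} (hf : Set.InjOn f s) :
    ∑ x ∈ s, g (f x) ≤ 1 := by
  classical
  rw [← sum_image hf]
  exact sum_le_hasSum _ (fun s _ => h.nonneg s) h.hasSum

theorem hasSum_sub (h : IsDelayLaw g R) (u : ℤ) : HasSum (fun s => g (s - u)) 1 :=
  (Equiv.subRight u).hasSum_iff.2 h.hasSum

theorem sum_sub_eq_one (h : IsDelayLaw g R) {u : ℤ} {s : Finset ℤ}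
    (hs : ∀ x, g (x - u) ≠ 0 → x ∈ s) : ∑ x ∈ s, g (x - u) = 1 :=
  (hasSum_sum_of_ne_finset_zero fun x hx => by_contra fun hgx => hx (hs x hgx)).unique
    (h.hasSum_sub u)

end IsDelayLaw

/-- The law of the sum of a delay of law `g` and an independent delay `δ z`, `z` uniform. -/
noncomputable def mixLaw {β : Type*} [Fintype β] (δ : β → ℤ) (g : ℤ → ℝ) (s : ℤ) : ℝ :=
  𝔼 z, g (s - δ z)

section MixLaw

variable {β : Type*} [Fintype β] {g : ℤ → ℝ} {R L : ℕ}

theorem isDelayLaw_mixLaw [Nonempty β] (h : IsDelayLaw g R) {δ : β → ℤ} {u : ℤ}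
    (hδ : ∀ z, δ z ∈ Set.Ico u (u + L)) : IsDelayLaw (mixLaw δ g) (R + L) where
  nonneg s := expect_nonneg fun z _ => h.nonneg _
  hasSum := by
    have hmean := (hasSum_sum fun z (_ : z ∈ univ) => h.hasSum_sub (δ z)).div_const
      (Fintype.card β : ℝ)
    simp only [sum_const, card_univ, nsmul_one] at hmean
    rw [div_self (Nat.cast_ne_zero.2 Fintype.card_ne_zero)] at hmean
    exact hmean.congr_fun fun s => Fintype.expect_eq_sum_div_card _
  exists_support_subset := by
    obtain ⟨c, hc⟩ := h.exists_support_subset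
    refine ⟨c + u, fun s hs => ?_⟩
    obtain ⟨z, -, hz⟩ := exists_ne_zero_of_expect_ne_zero hs
    have hgs := hc hz
    have hδz := hδ z
    simp only [Set.mem_Ico, Nat.cast_add] at hgs hδz ⊢
    omega

theorem mixLaw_min_le (h : IsDelayLaw g R) (cap ramp s : ℤ) :
    mixLaw (fun z : Fin L × Fin L => min (cap + z.2) (ramp + z.1)) g s ≤ 2 / L := by
  have hsum (c : ℤ) : ∑ x : Fin L, g (s - (c + x)) ≤ 1 :=
    h.sum_comp_le_one fun x _ y _ hxy => by
      exact Fin.ext (by omega)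
  have hmin (z : Fin L × Fin L) :
      g (s - min (cap + z.2) (ramp + z.1)) ≤ g (s - (cap + z.2)) + g (s - (ramp + z.1)) := by
    rcases min_choice (cap + z.2 : ℤ) (ramp + z.1) with hz | hz <;> rw [hz]
    exacts [le_add_of_nonneg_right (h.nonneg _), le_add_of_nonneg_left (h.nonneg _)]
  obtain rfl | hL := L.eq_zero_or_pos
  · simp [mixLaw]
  have : Nonempty (Fin L) := ⟨⟨0, hL⟩⟩
  calc mixLaw (fun z : Fin L × Fin L => min (cap + z.2) (ramp + z.1)) g s
      ≤ 𝔼 z : Fin L × Fin L, (g (s - (cap + z.2)) + g (s - (ramp + z.1))) :=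
        expect_le_expect fun z _ => hmin z
    _ = (∑ y : Fin L, g (s - (cap + y))) / L + (∑ x : Fin L, g (s - (ramp + x))) / L := by
        simp only [expect_add_distrib, ← univ_product_univ, expect_product, Fintype.expect_const]
        simp only [Fintype.expect_eq_sum_div_card, Fintype.card_fin]
    _ ≤ 1 / L + 1 / L := by gcongr <;> exact hsum _
    _ = 2 / L := by ring

end MixLaw

/-- The uniform distribution on `[0, L)`. -/
noncomputable def uniformLaw (L : ℕ) : ℤ → ℝ := (Set.Ico 0 (L : ℤ)).indicator fun _ => (L : ℝ)⁻¹

theorem uniformLaw_zero {L : ℕ} (hL : 0 < L) : uniformLaw L 0 = (L : ℝ)⁻¹ :=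
  Set.indicator_of_mem (Set.mem_Ico.2 ⟨le_rfl, mod_cast hL⟩) _

theorem isDelayLaw_uniformLaw {L : ℕ} (hL : L ≠ 0) : IsDelayLaw (uniformLaw L) L where
  nonneg := Set.indicator_nonneg fun _ _ => by positivity
  hasSum := by
    have h : HasSum (uniformLaw L) (∑ s ∈ Finset.Ico 0 (L : ℤ), uniformLaw L s) :=
      hasSum_sum_of_ne_finset_zero fun s hs =>
        Set.indicator_of_notMem (by simpa only [mem_Ico, Set.mem_Ico] using hs) _
    have hsum : ∑ s ∈ Finset.Ico 0 (L : ℤ), uniformLaw L s =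
        ∑ _s ∈ Finset.Ico 0 (L : ℤ), (L : ℝ)⁻¹ :=
      sum_congr rfl fun s hs =>
        Set.indicator_of_mem (by simpa only [mem_Ico, Set.mem_Ico] using hs) _
    simpa [hsum, hL] using h
  exists_support_subset := ⟨0, by simp [uniformLaw]⟩

theorem uniformLaw_le (L : ℕ) (s : ℤ) : uniformLaw L s ≤ 2 / L := by
  have hL : (L : ℝ)⁻¹ ≤ 2 / L := by
    rw [← one_div]
    gcongr
    exact one_le_two
  exact Set.indicator_apply_le' (fun _ => hL) fun _ => by positivity

/-! ### Refining the delays by one random level -/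

/-- The combinatorial data of a routing instance that matter for scheduling: the packets `users e`
whose paths contain the edge `e`, and the position `pos e i` of `e` on the path of packet `i` (with
a junk value for `i ∉ users e`). -/
structure PathSystem (E K P : Type*) where
  users : E → Finset K
  pos : E → K → P
  eq_of_pos_eq {e e' : E} {i : K} : i ∈ users e → i ∈ users e' → pos e i = pos e' i → e = e'

namespace PathSystem

variable {E K P : Type*} (S : PathSystem E K P)

/-- The expected number of packets crossing edge `e` at time `t` if packet `i` crosses the edge at
position `p` of its path at time `N i p` plus a random delay of law `g p`. -/
def expectedLoad (g : P → ℤ → ℝ) (N : K → P → ℤ) (e : E) (t : ℤ) : ℝ :=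
  ∑ i ∈ S.users e, g (S.pos e i) (t - N i (S.pos e i))

open Classical in
/-- The packets that cross edge `x.1` at time `x.2` with positive probability. -/
noncomputable def candidates (g : P → ℤ → ℝ) (N : K → P → ℤ) (x : E × ℤ) : Finset K :=
  {i ∈ S.users x.1 | g (S.pos x.1 i) (x.2 - N i (S.pos x.1 i)) ≠ 0}

variable {g : P → ℤ → ℝ} {N : K → P → ℤ} {R : ℕ} {μ : ℝ}

theorem mem_candidates {x : E × ℤ} {i : K} :
    i ∈ S.candidates g N x ↔
      i ∈ S.users x.1 ∧ g (S.pos x.1 i) (x.2 - N i (S.pos x.1 i)) ≠ 0 := by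
  simp [candidates]

theorem candidates_subset (x : E × ℤ) : S.candidates g N x ⊆ S.users x.1 :=
  fun _ hi => (S.mem_candidates.1 hi).1

theorem card_candidates_le (hg : ∀ p, IsDelayLaw (g p) R)
    (hload : ∀ e t, S.expectedLoad g N e t ≤ μ) (x : E × ℤ) :
    #(S.candidates g N x) ≤ 2 * R * μ := by
  obtain ⟨e, t⟩ := x
  -- a candidate is certain to cross `e` within `R` time steps of `t`
  have hcertain (i) (hi : i ∈ S.candidates g N (e, t)) :
      ∑ s ∈ Ico (t - R) (t + R), g (S.pos e i) (s - N i (S.pos e i)) = 1 := by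
    obtain ⟨c, hc⟩ := (hg (S.pos e i)).exists_support_subset
    have ht := hc (S.mem_candidates.1 hi).2
    refine (hg _).sum_sub_eq_one fun s hs => ?_
    have hs := hc hs
    simp only [Set.mem_Ico, mem_Ico] at ht hs ⊢
    omega
  calc (#(S.candidates g N (e, t)) : ℝ)
      = ∑ i ∈ S.candidates g N (e, t), ∑ s ∈ Ico (t - R) (t + R),
          g (S.pos e i) (s - N i (S.pos e i)) := by
        rw [sum_congr rfl hcertain, sum_const, nsmul_one]
    _ = ∑ s ∈ Ico (t - R) (t + R), ∑ i ∈ S.candidates g N (e, t),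
          g (S.pos e i) (s - N i (S.pos e i)) := sum_comm
    _ ≤ ∑ s ∈ Ico (t - R) (t + R), S.expectedLoad g N e s := by
        refine sum_le_sum fun s _ => ?_
        exact sum_le_sum_of_subset_of_nonneg (S.candidates_subset (e, t))
          fun i _ _ => (hg _).nonneg _
    _ ≤ ∑ _s ∈ Ico (t - R) (t + R), μ := sum_le_sum fun s _ => hload e s
    _ = 2 * R * μ := by
        rw [sum_const, Int.card_Ico, nsmul_eq_mul]
        have : (t + R - (t - R)).toNat = 2 * R := by omega
        rw [this]
        push_cast
        rfl

theorem encard_setOf_mem_candidates_le (hg : ∀ p, IsDelayLaw (g p) R) (i : K) (W : Finset P) :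
    {x : E × ℤ | i ∈ S.candidates g N x ∧ S.pos x.1 i ∈ W}.encard ≤ (#W * R : ℕ) := by
  choose c hc using fun p => (hg p).exists_support_subset
  let T : Finset ((_ : P) × ℤ) := W.sigma fun p => Ico (c p) (c p + R)
  have hT : #T = #W * R := by simp [T]
  rw [← hT, ← Set.encard_coe_eq_coe_finsetCard]
  refine Set.encard_le_encard_of_injOn
    (f := fun x => ⟨S.pos x.1 i, x.2 - N i (S.pos x.1 i)⟩) (fun x hx => ?_) ?_
  · obtain ⟨hxi, hW⟩ := hx
    simpa [T, hW] using hc _ (S.mem_candidates.1 hxi).2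
  · rintro ⟨e, t⟩ hx ⟨e', t'⟩ hx' h
    obtain ⟨hpos, ht⟩ := Sigma.mk.inj h
    obtain rfl := S.eq_of_pos_eq (S.candidates_subset _ hx.1) (S.candidates_subset _ hx'.1) hpos
    simpa using ht

theorem finite_setOf_candidates_nonempty [Finite K] [Finite P]
    (hg : ∀ p, IsDelayLaw (g p) R) : {x | (S.candidates g N x).Nonempty}.Finite := by
  have := Fintype.ofFinite P
  have hunion : {x | (S.candidates g N x).Nonempty} =
      ⋃ i, {x | i ∈ S.candidates g N x ∧ S.pos x.1 i ∈ (univ : Finset P)} := by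
    ext x
    simp [Finset.Nonempty]
  rw [hunion]
  exact Set.finite_iUnion fun i =>
    Set.finite_of_encard_le_coe (S.encard_setOf_mem_candidates_le hg i univ)

section Dependencies

variable {B : Type*} [DecidableEq K] [DecidableEq B]

/-- The random choices `(i, b)` that influence the number of packets crossing edge `x.1` at time
`x.2`, if the delay of packet `i` at position `p` is determined by its choices `(i, b)`,
`b ∈ vars p`. -/
noncomputable def dependencies (vars : P → Finset B) (g : P → ℤ → ℝ) (N : K → P → ℤ)
    (x : E × ℤ) : Finset (K × B) :=
  (S.candidates g N x).biUnion fun i => {i} ×ˢ vars (S.pos x.1 i)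

variable {vars : P → Finset B} {v M : ℕ}

theorem mem_dependencies {x : E × ℤ} {i : K} {b : B} :
    (i, b) ∈ S.dependencies vars g N x ↔
      i ∈ S.candidates g N x ∧ b ∈ vars (S.pos x.1 i) := by
  simp [dependencies]

theorem card_dependencies_le (hv : ∀ p, #(vars p) ≤ v) (x : E × ℤ) :
    #(S.dependencies vars g N x) ≤ #(S.candidates g N x) * v :=
  card_biUnion_le_card_mul _ _ _ fun i _ => by simpa using hv (S.pos x.1 i)

theorem card_filter_mem_dependencies_le [Fintype P] (hg : ∀ p, IsDelayLaw (g p) R)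
    (hM : ∀ b, #{p | b ∈ vars p} ≤ M) (T : Finset (E × ℤ)) (w : K × B) :
    #{x ∈ T | w ∈ S.dependencies vars g N x} ≤ M * R := by
  obtain ⟨i, b⟩ := w
  have hsub : (↑{x ∈ T | (i, b) ∈ S.dependencies vars g N x} : Set (E × ℤ)) ⊆
      {x | i ∈ S.candidates g N x ∧ S.pos x.1 i ∈ ({p | b ∈ vars p} : Finset P)} := by
    intro x hx
    simpa [mem_dependencies] using (mem_filter.1 hx).2
  have hcard := (Set.encard_le_encard hsub).trans (S.encard_setOf_mem_candidates_le hg i _)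
  rw [Set.encard_coe_eq_coe_finsetCard, Nat.cast_le] at hcard
  exact hcard.trans (Nat.mul_le_mul_right R (hM b))

theorem card_filter_not_disjoint_dependencies_le [Fintype P]
    (hg : ∀ p, IsDelayLaw (g p) R) (hload : ∀ e t, S.expectedLoad g N e t ≤ μ)
    (hv : ∀ p, #(vars p) ≤ v) (hM : ∀ b, #{p | b ∈ vars p} ≤ M)
    (T : Finset (E × ℤ)) (x : E × ℤ) :
    #{y ∈ T | ¬ Disjoint (S.dependencies vars g N x) (S.dependencies vars g N y)} ≤
      2 * v * M * R ^ 2 * μ := by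
  calc (#{y ∈ T | ¬ Disjoint (S.dependencies vars g N x) (S.dependencies vars g N y)} : ℝ)
      ≤ (#(S.candidates g N x) * v * (M * R) : ℕ) :=
        Nat.cast_le.2 <| (card_filter_not_disjoint_le
          (S.card_filter_mem_dependencies_le hg hM T) x).trans
          (Nat.mul_le_mul_right _ (S.card_dependencies_le hv x))
    _ = #(S.candidates g N x) * v * (M * R) := by push_cast; rfl
    _ ≤ 2 * R * μ * v * (M * R) := by
        gcongr
        exact S.card_candidates_le hg hload x
    _ = 2 * v * M * R ^ 2 * μ := by ring

end Dependencies

variable {β : Type*} [Fintype β] {δ : P → β → ℤ}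

theorem expectedLoad_add_eq_sum_candidates (hg : ∀ p s, 0 ≤ g p s) (ω : K → β) (e : E) (t : ℤ) :
    S.expectedLoad g (fun i p => N i p + δ p (ω i)) e t =
      ∑ i ∈ S.candidates (fun p => mixLaw (δ p) (g p)) N (e, t),
        g (S.pos e i) (t - N i (S.pos e i) - δ (S.pos e i) (ω i)) := by
  simp only [expectedLoad, ← sub_sub]
  refine (sum_subset (S.candidates_subset (e, t)) fun i hi hi' => ?_).symm
  have hzero : mixLaw (δ (S.pos e i)) (g (S.pos e i)) (t - N i (S.pos e i)) = 0 :=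
    by_contra fun h => hi' (S.mem_candidates.2 ⟨hi, h⟩)
  exact (expect_eq_zero_iff_of_nonneg fun z _ => hg _ _).1 hzero _ (mem_univ _)

theorem sum_candidates_mixLaw_le (hg : ∀ p s, 0 ≤ g p s) (e : E) (t : ℤ) :
    ∑ i ∈ S.candidates (fun p => mixLaw (δ p) (g p)) N (e, t),
        mixLaw (δ (S.pos e i)) (g (S.pos e i)) (t - N i (S.pos e i)) ≤
      S.expectedLoad (fun p => mixLaw (δ p) (g p)) N e t :=
  sum_le_sum_of_subset_of_nonneg (S.candidates_subset (e, t))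
    fun _ _ _ => expect_nonneg fun _ _ => hg _ _

theorem exists_expectedLoad_add_le {B α : Type*} [Finite K] [Fintype P] [Fintype B] [Fintype α]
    [DecidableEq B] [Nonempty α] {δ : P → (B → α) → ℤ} {vars : P → Finset B} {v M : ℕ}
    {m ε d : ℝ} (hδ : ∀ p, DependsOn (δ p) (vars p : Set B)) (hv : ∀ p, #(vars p) ≤ v)
    (hM : ∀ b, #{p | b ∈ vars p} ≤ M) (hg0 : ∀ p s, 0 ≤ g p s) (hgm : ∀ p s, g p s ≤ m)
    (hlaw : ∀ p, IsDelayLaw (mixLaw (δ p) (g p)) R)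
    (hload : ∀ e t, S.expectedLoad (fun p => mixLaw (δ p) (g p)) N e t ≤ μ)
    (hm : 0 < m) (hμ : 0 < μ) (hε : 0 ≤ ε) (hεμ : ε ≤ 2 * μ)
    (hd : 1 ≤ d) (hdeg : 2 * v * M * R ^ 2 * μ ≤ d)
    (hfail : 4 * d * Real.exp (-(ε ^ 2 / (4 * m * μ))) ≤ 1) :
    ∃ ω : K → B → α, ∀ e t,
      S.expectedLoad g (fun i p => N i p + δ p (ω i)) e t ≤ μ + ε := by
  classical
  have := Fintype.ofFinite K
  let cand (x : E × ℤ) : Finset K := S.candidates (fun p => mixLaw (δ p) (g p)) N x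
  let q (x : E × ℤ) (i : K) (a : B → α) : ℝ :=
    if i ∈ cand x then g (S.pos x.1 i) (x.2 - N i (S.pos x.1 i) - δ (S.pos x.1 i) a) else 0
  have hmean (x : E × ℤ) (i : K) : 𝔼 a, q x i a = if i ∈ cand x then
      mixLaw (δ (S.pos x.1 i)) (g (S.pos x.1 i)) (x.2 - N i (S.pos x.1 i)) else 0 := by
    by_cases hi : i ∈ cand x <;> simp [q, hi, mixLaw]
  have hfin : {x | (cand x).Nonempty}.Finite := S.finite_setOf_candidates_nonempty hlaw
  obtain ⟨ω, hω⟩ : ∃ ω : K → B → α, ∀ x ∈ hfin.toFinset, ∑ i, q x i (ω i) ≤ μ + ε := by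
    refine exists_forall_sum_le
      (vbl := S.dependencies vars (fun p => mixLaw (δ p) (g p)) N) hm hμ hε hεμ hd ?_ ?_ ?_ ?_
      (fun x _ => (S.card_filter_not_disjoint_dependencies_le hlaw hload hv hM _ x).trans hdeg)
      hfail
    · intro x i a a' h
      by_cases hi : i ∈ cand x
      · simp only [q, if_pos hi, hδ _ fun b hb => h b (S.mem_dependencies.2 ⟨hi, hb⟩)]
      · simp only [q, if_neg hi]
    · intro x i a
      simp only [q]
      split_ifs
      exacts [hg0 _ _, le_rfl]
    · intro x i a
      simp only [q]
      split_ifs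
      exacts [hgm _ _, hm.le]
    · rintro ⟨e, t⟩ -
      simp only [hmean, sum_ite_mem, univ_inter]
      exact (S.sum_candidates_mixLaw_le hg0 e t).trans (hload e t)
  refine ⟨ω, fun e t => ?_⟩
  rw [S.expectedLoad_add_eq_sum_candidates hg0 ω e t]
  by_cases h : (cand (e, t)).Nonempty
  · simpa [q, ← sum_filter] using hω (e, t) (hfin.mem_toFinset.2 h)
  · rw [show S.candidates _ N (e, t) = ∅ from not_nonempty_iff_eq_empty.1 h, sum_empty]
    positivity

end PathSystem

/-! ### Delays of a single level -/

section LevelDelay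

variable {n L p : ℕ}

/-- The number of `m ∈ [1, p]` of 2-adic valuation `n`, the positions at which a packet may wait on
account of its delay of level `n`. -/
def waitCount (n p : ℕ) : ℕ := (p + 2 ^ n) / 2 ^ (n + 1)

/-- The length of a block of positions that contains `2 * L` waiting positions of level `n`. -/
def blockLength (n L : ℕ) : ℕ := 2 ^ (n + 2) * L

/-- The delay of level `n` at position `p` of block `b`: it starts from `b * L + x` and grows by one
at each waiting position until it reaches `(b + 1) * L + y`. The subtraction does not truncate
inside the block, since `2 * b * L` waiting positions precede it. -/
def blockDelay (n L b x y p : ℕ) : ℕ := min ((b + 1) * L + y) (waitCount n p - b * L + x)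

/-- The delay of level `n` determined by the values `a b` chosen for the blocks `b`. -/
def levelDelay (n L : ℕ) (a : ℕ → ℕ) (p : ℕ) : ℕ :=
  blockDelay n L (p / blockLength n L) (a (p / blockLength n L)) (a (p / blockLength n L + 1)) p

theorem two_pow_succ_dvd_add_two_pow_iff {m : ℕ} (hm : m ≠ 0) :
    2 ^ (n + 1) ∣ m + 2 ^ n ↔ padicValNat 2 m = n := by
  have hval : padicValNat 2 m = n ↔ 2 ^ n ∣ m ∧ ¬ 2 ^ (n + 1) ∣ m := by
    simp only [padicValNat_dvd_iff_le hm]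
    omega
  rw [hval]
  by_cases h : 2 ^ n ∣ m
  · obtain ⟨k, rfl⟩ := h
    have hpos : 0 < 2 ^ n := by positivity
    rw [pow_succ, ← Nat.mul_add_one, Nat.mul_dvd_mul_iff_left hpos, Nat.mul_dvd_mul_iff_left hpos]
    simp only [dvd_mul_right, true_and]
    omega
  · have hn : ¬ 2 ^ (n + 1) ∣ m + 2 ^ n := fun h' =>
      h ((Nat.dvd_add_left dvd_rfl).1 ((pow_dvd_pow 2 n.le_succ).trans h'))
    simp only [h, hn, false_and]

theorem waitCount_succ (n p : ℕ) :
    waitCount n (p + 1) = waitCount n p + if padicValNat 2 (p + 1) = n then 1 else 0 := by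
  simp only [waitCount, ← two_pow_succ_dvd_add_two_pow_iff p.succ_ne_zero, Nat.succ_eq_add_one,
    add_right_comm p 1, Nat.succ_div]

theorem waitCount_mono (n : ℕ) : Monotone (waitCount n) :=
  monotone_nat_of_le_succ fun p => (waitCount_succ n p).symm ▸ Nat.le_add_right _ _

theorem waitCount_mul_blockLength (n L b : ℕ) :
    waitCount n (b * blockLength n L) = 2 * (b * L) := by
  have h : b * (2 ^ (n + 2) * L) + 2 ^ n = 2 ^ n + 2 ^ (n + 1) * (2 * (b * L)) := by ring
  rw [waitCount, blockLength, h, Nat.add_mul_div_left _ _ (by positivity),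
    Nat.div_eq_of_lt (Nat.pow_lt_pow_right one_lt_two n.lt_succ_self), zero_add]

theorem cast_blockDelay_mem_Ico {b x y : ℕ} (hx : x < L) (hy : y < L) :
    (blockDelay n L b x y p : ℤ) ∈
      Set.Ico (blockDelay n L b 0 0 p : ℤ) (blockDelay n L b 0 0 p + L) := by
  simp only [blockDelay, Set.mem_Ico]
  omega

theorem blockDelay_le_succ (n L b x y p : ℕ) :
    blockDelay n L b x y p ≤ blockDelay n L b x y (p + 1) := by
  have := waitCount_mono n (Nat.le_add_right p 1)
  unfold blockDelay
  omega

theorem blockDelay_succ_le {b x y : ℕ} (hp : b * blockLength n L ≤ p) :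
    blockDelay n L b x y (p + 1) ≤
      blockDelay n L b x y p + if padicValNat 2 (p + 1) = n then 1 else 0 := by
  have hstart := waitCount_mono n hp
  rw [waitCount_mul_blockLength] at hstart
  unfold blockDelay
  rw [waitCount_succ]
  omega

theorem levelDelay_eq_blockDelay {a : ℕ → ℕ} (ha : ∀ b, a b ≤ L) (hL : 0 < L) {b : ℕ}
    (hp : b * blockLength n L ≤ p) (hp' : p ≤ (b + 1) * blockLength n L) :
    levelDelay n L a p = blockDelay n L b (a b) (a (b + 1)) p := by
  have hW : 0 < blockLength n L := by unfold blockLength; positivity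
  obtain hlt | rfl := hp'.lt_or_eq
  · rw [levelDelay, Nat.div_eq_of_lt_le hp hlt]
  · -- at the common end point of two blocks, both delays are `(b + 1) * L + a (b + 1)`
    have hend := ha (b + 1)
    rw [levelDelay, Nat.mul_div_cancel _ hW]
    simp only [blockDelay, waitCount_mul_blockLength]
    simp only [add_mul, one_mul]
    omega

theorem levelDelay_zero_le {a : ℕ → ℕ} (ha : ∀ b, a b ≤ L) : levelDelay n L a 0 ≤ L := by
  have hcount : waitCount n 0 = 0 := by simpa using waitCount_mul_blockLength n L 0
  simp only [levelDelay, blockDelay, Nat.zero_div, hcount]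
  exact (min_le_right _ _).trans (by simpa using ha 0)

theorem levelDelay_le_succ_and_succ_le {a : ℕ → ℕ} (ha : ∀ b, a b ≤ L) (hL : 0 < L) (p : ℕ) :
    levelDelay n L a p ≤ levelDelay n L a (p + 1) ∧
      levelDelay n L a (p + 1) ≤
        levelDelay n L a p + if padicValNat 2 (p + 1) = n then 1 else 0 := by
  have hW : 0 < blockLength n L := by unfold blockLength; positivity
  have hp : p / blockLength n L * blockLength n L ≤ p := Nat.div_mul_le_self _ _
  have hp' : p < (p / blockLength n L + 1) * blockLength n L :=
    (Nat.div_lt_iff_lt_mul hW).1 (Nat.lt_succ_self _)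
  rw [levelDelay_eq_blockDelay ha hL hp hp'.le,
    levelDelay_eq_blockDelay ha hL (hp.trans p.le_succ) hp']
  exact ⟨blockDelay_le_succ .., blockDelay_succ_le hp⟩

end LevelDelay

/-- Nondecreasing delays along a path that start with at most `r` and otherwise grow by at most one,
and only at positions of 2-adic valuation at most `J`: those produced by the levels up to `J`. -/
structure IsDelayProfile (r J : ℕ) (d : ℕ → ℕ) : Prop where
  zero_le : d 0 ≤ r
  le_succ (p : ℕ) : d p ≤ d (p + 1)
  succ_le (p : ℕ) : d (p + 1) ≤ d p + if padicValNat 2 (p + 1) ≤ J then 1 else 0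

theorem IsDelayProfile.levelDelay_add {r J L : ℕ} {d a : ℕ → ℕ} (h : IsDelayProfile r J d)
    (ha : ∀ b, a b ≤ L) (hL : 0 < L) :
    IsDelayProfile (r + L) (J + 1) fun p => levelDelay (J + 1) L a p + d p where
  zero_le := by
    have := levelDelay_zero_le (n := J + 1) ha
    have := h.zero_le
    omega
  le_succ p := Nat.add_le_add (levelDelay_le_succ_and_succ_le ha hL p).1 (h.le_succ p)
  succ_le p := by
    have := (levelDelay_le_succ_and_succ_le (n := J + 1) ha hL p).2
    have := h.succ_le p
    split_ifs at * <;> omega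

/-! ### The hierarchy of levels -/

/-- The number of values among which each block of level `n` chooses. -/
def scale (n₀ n : ℕ) : ℕ := 16 ^ (n₀ + n)

/-- A bound for the total random delay of the levels up to `n`. -/
def spread (n₀ n : ℕ) : ℕ := ∑ j ∈ range (n + 1), scale n₀ j

/-- The law of the random delay of the levels up to `n` at position `p`, where level `0` contributes
a uniform delay in `[0, scale n₀ 0)`. -/
noncomputable def delayLaw (n₀ : ℕ) : ℕ → ℕ → ℤ → ℝ
  | 0, _ => uniformLaw (scale n₀ 0)
  | n + 1, p => mixLaw (fun z : Fin (scale n₀ (n + 1)) × Fin (scale n₀ (n + 1)) =>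
      (blockDelay (n + 1) (scale n₀ (n + 1)) (p / blockLength (n + 1) (scale n₀ (n + 1)))
        z.1 z.2 p : ℤ)) (delayLaw n₀ n p)

/-- The scales starting from `16 ^ n₀` are so large that the local lemma applies, at every level, to
the events that fixing the random delays of level `n + 1` raises an expected load by more than
`(1 / 2) ^ (n + 1)`: the factors bound the degree of dependence and the probability of an event. -/
def IsBaseLevel (n₀ : ℕ) : Prop :=
  ∀ n, (4 * (24 * blockLength (n + 1) (scale n₀ (n + 1)) * spread n₀ (n + 1) ^ 2) *
    Real.exp (-(((1 / 2) ^ (n + 1)) ^ 2 / (4 * (2 / scale n₀ n) * 3))) : ℝ) ≤ 1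

section Scales

variable (n₀ n : ℕ)

theorem scale_pos : 0 < scale n₀ n := by unfold scale; positivity

theorem scale_succ : scale n₀ (n + 1) = 16 * scale n₀ n := by
  unfold scale
  ring

theorem spread_succ : spread n₀ (n + 1) = spread n₀ n + scale n₀ (n + 1) := sum_range_succ ..

theorem spread_le : spread n₀ n ≤ 2 * scale n₀ n := by
  induction n with
  | zero => simp [spread, two_mul]
  | succ n ih => rw [spread_succ, scale_succ]; omega

theorem isDelayLaw_delayLaw (p : ℕ) : IsDelayLaw (delayLaw n₀ n p) (spread n₀ n) := by
  induction n with
  | zero => simpa [spread, delayLaw] using isDelayLaw_uniformLaw (scale_pos n₀ 0).ne'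
  | succ n ih =>
    have : NeZero (scale n₀ (n + 1)) := ⟨(scale_pos n₀ (n + 1)).ne'⟩
    rw [spread_succ]
    exact isDelayLaw_mixLaw ih fun z => cast_blockDelay_mem_Ico z.1.isLt z.2.isLt

theorem delayLaw_le (p : ℕ) (s : ℤ) : delayLaw n₀ n p s ≤ 2 / scale n₀ n := by
  cases n with
  | zero => exact uniformLaw_le _ s
  | succ n =>
    simpa only [blockDelay, delayLaw, Nat.cast_min, Nat.cast_add] using
      mixLaw_min_le (isDelayLaw_delayLaw n₀ n p) _ _ s

end Scales

section Numerics

theorem eventually_mul_pow_mul_exp_neg_div_le_one (C : ℝ) (k : ℕ) {c : ℝ} (hc : 0 < c) :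
    ∀ᶠ z : ℝ in Filter.atTop, C * z ^ k * Real.exp (-(z / c)) ≤ 1 := by
  have hlim := ((Real.tendsto_pow_mul_exp_neg_atTop_nhds_zero k).comp
    (Filter.tendsto_id.atTop_div_const hc)).const_mul (C * c ^ k)
  rw [mul_zero] at hlim
  filter_upwards [hlim.eventually_le_const one_pos] with z hz
  refine Eq.trans_le ?_ hz
  simp only [Function.comp_apply, id, div_pow]
  field_simp

variable (n₀ n : ℕ)

theorem cast_scale : (scale n₀ n : ℝ) = (4 ^ (n₀ + n)) ^ 2 := by
  rw [scale, ← pow_mul, mul_comm, pow_mul]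
  norm_num

theorem degree_le : (24 * blockLength (n + 1) (scale n₀ (n + 1)) * spread n₀ (n + 1) ^ 2 : ℝ) ≤
    3145728 * (4 ^ (n₀ + n)) ^ 7 := by
  set z : ℝ := 4 ^ (n₀ + n)
  have hscale : (scale n₀ (n + 1) : ℝ) = 16 * z ^ 2 := by
    rw [scale_succ, Nat.cast_mul, cast_scale, Nat.cast_ofNat]
  have hspread : (spread n₀ (n + 1) : ℝ) ≤ 32 * z ^ 2 := by
    have : (spread n₀ (n + 1) : ℝ) ≤ 2 * scale n₀ (n + 1) := mod_cast spread_le n₀ (n + 1)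
    linarith
  have hpow : (2 : ℝ) ^ n ≤ z :=
    (pow_le_pow_left₀ zero_le_two (by norm_num) n).trans
      (pow_le_pow_right₀ (by norm_num) (Nat.le_add_left n n₀))
  calc (24 * blockLength (n + 1) (scale n₀ (n + 1)) * spread n₀ (n + 1) ^ 2 : ℝ)
      = 24 * (8 * 2 ^ n * (16 * z ^ 2)) * spread n₀ (n + 1) ^ 2 := by
        rw [blockLength, Nat.cast_mul, hscale]
        push_cast
        ring
    _ ≤ 24 * (8 * z * (16 * z ^ 2)) * (32 * z ^ 2) ^ 2 := by gcongr
    _ = 3145728 * z ^ 7 := by ring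

theorem le_exponent :
    (4 ^ (n₀ + n) / 96 : ℝ) ≤ ((1 / 2) ^ (n + 1)) ^ 2 / (4 * (2 / scale n₀ n) * 3) := by
  have hhalf : (((1 : ℝ) / 2) ^ (n + 1)) ^ 2 = 1 / (4 * 4 ^ n) := by
    rw [← pow_mul, mul_comm, pow_mul, div_pow, one_pow, div_pow, one_pow, pow_succ]
    norm_num
    ring
  have hn₀ : (1 : ℝ) ≤ 4 ^ n₀ := one_le_pow₀ (by norm_num)
  calc (4 ^ (n₀ + n) / 96 : ℝ) ≤ 4 ^ n₀ * (4 ^ (n₀ + n) / 96) :=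
        le_mul_of_one_le_left (by positivity) hn₀
    _ = ((1 / 2) ^ (n + 1)) ^ 2 / (4 * (2 / scale n₀ n) * 3) := by
        rw [hhalf, cast_scale, pow_add]
        field_simp
        norm_num

theorem exists_isBaseLevel : ∃ n₀, IsBaseLevel n₀ := by
  obtain ⟨z₀, hz₀⟩ := Filter.eventually_atTop.1
    (eventually_mul_pow_mul_exp_neg_div_le_one 12582912 7 (c := 96) (by norm_num))
  obtain ⟨n₀, hn₀⟩ := pow_unbounded_of_one_lt z₀ (show (1 : ℝ) < 4 by norm_num)
  refine ⟨n₀, fun n => ?_⟩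
  have hz : (4 : ℝ) ^ n₀ ≤ 4 ^ (n₀ + n) := pow_le_pow_right₀ (by norm_num) (by omega)
  refine le_trans ?_ (hz₀ (4 ^ (n₀ + n)) (hn₀.le.trans hz))
  exact mul_le_mul (by linarith [degree_le n₀ n])
    (Real.exp_le_exp.2 (neg_le_neg (le_exponent n₀ n))) (by positivity) (by positivity)

end Numerics

/-! ### Refinement down to the base level -/

section Refinement

variable {D W : ℕ}

/-- The two blocks, among those numbered by `Fin (D + 2)`, whose values determine the delay at
position `p` when the blocks have length `W`. -/
def adjacentBlocks (W : ℕ) (p : Fin (D + 1)) : Finset (Fin (D + 2)) :=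
  {Fin.ofNat (D + 2) (p / W), Fin.ofNat (D + 2) (p / W + 1)}

theorem val_ofNat_div (p : Fin (D + 1)) : (Fin.ofNat (D + 2) (p / W) : ℕ) = p / W :=
  Nat.mod_eq_of_lt (by have := Nat.div_le_self p W; omega)

theorem val_ofNat_div_add_one (p : Fin (D + 1)) :
    (Fin.ofNat (D + 2) (p / W + 1) : ℕ) = p / W + 1 :=
  Nat.mod_eq_of_lt (by have := Nat.div_le_self p W; omega)

theorem ofNat_div_ne_ofNat_div_add_one (p : Fin (D + 1)) :
    Fin.ofNat (D + 2) (p / W) ≠ Fin.ofNat (D + 2) (p / W + 1) := fun h => by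
  have hval := congrArg Fin.val h
  rw [val_ofNat_div, val_ofNat_div_add_one] at hval
  omega

theorem card_filter_mem_adjacentBlocks_le (hW : 0 < W) (b : Fin (D + 2)) :
    #{p : Fin (D + 1) | b ∈ adjacentBlocks W p} ≤ 2 * W := by
  have hmaps : Set.MapsTo (fun p : Fin (D + 1) => (p : ℕ) + W)
      ({p : Fin (D + 1) | b ∈ adjacentBlocks W p} : Finset (Fin (D + 1)))
      (Ico (b * W) (b * W + 2 * W) : Finset ℕ) := by
    intro p hp
    simp only [adjacentBlocks, coe_filter, mem_univ, true_and, mem_insert, mem_singleton,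
      Set.mem_ofPred_eq, Fin.ext_iff, val_ofNat_div, val_ofNat_div_add_one] at hp
    have hdiv := Nat.div_add_mod' (p : ℕ) W
    have hmod := Nat.mod_lt (p : ℕ) hW
    simp only [coe_Ico, Set.mem_Ico]
    obtain hp | hp := hp
    · rw [hp]
      omega
    · rw [hp, add_mul, one_mul]
      omega
  have hinj : Set.InjOn (fun p : Fin (D + 1) => (p : ℕ) + W)
      ({p : Fin (D + 1) | b ∈ adjacentBlocks W p} : Finset (Fin (D + 1))) :=
    fun p _ q _ hpq => Fin.ext (Nat.add_right_cancel hpq)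
  simpa using card_le_card_of_injOn _ hmaps hinj

/-- The delay of level `n` at position `p` for the block values `ω`. -/
def blockwiseDelay (n L : ℕ) (p : Fin (D + 1)) (ω : Fin (D + 2) → Fin L) : ℤ :=
  levelDelay n L (fun b => ω (Fin.ofNat (D + 2) b)) p

theorem dependsOn_blockwiseDelay (n L : ℕ) (p : Fin (D + 1)) :
    DependsOn (blockwiseDelay n L p) (adjacentBlocks (blockLength n L) p : Set (Fin (D + 2))) := by
  intro ω ω' h
  have hb := h (Fin.ofNat (D + 2) (p / blockLength n L)) (by simp [adjacentBlocks])
  have hb' := h (Fin.ofNat (D + 2) (p / blockLength n L + 1)) (by simp [adjacentBlocks])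
  simp only [blockwiseDelay, levelDelay, hb, hb']

theorem mixLaw_blockwiseDelay (n L : ℕ) [NeZero L] (p : Fin (D + 1)) (g : ℤ → ℝ) :
    mixLaw (blockwiseDelay n L p) g = mixLaw (fun z : Fin L × Fin L =>
      (blockDelay n L (p / blockLength n L) z.1 z.2 p : ℤ)) g := by
  funext s
  exact expect_apply_apply (ofNat_div_ne_ofNat_div_add_one p) fun z : Fin L × Fin L =>
    g (s - blockDelay n L (p / blockLength n L) z.1 z.2 p)

theorem mixLaw_blockwiseDelay_delayLaw (n₀ n : ℕ) (p : Fin (D + 1)) :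
    mixLaw (blockwiseDelay (n + 1) (scale n₀ (n + 1)) p) (delayLaw n₀ n p) =
      delayLaw n₀ (n + 1) p := by
  have : NeZero (scale n₀ (n + 1)) := ⟨(scale_pos n₀ (n + 1)).ne'⟩
  rw [mixLaw_blockwiseDelay, delayLaw]

end Refinement

namespace PathSystem

variable {E K : Type*} {D n₀ J : ℕ}

theorem exists_expectedLoad_delayLaw_le (S : PathSystem E K (Fin (D + 1))) [Finite K]
    (hn₀ : IsBaseLevel n₀) {N : K → Fin (D + 1) → ℤ}
    (hload : ∀ e t, S.expectedLoad (fun p => delayLaw n₀ (J + 1) p) N e t ≤ 2 + (1 / 2) ^ (J + 1)) :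
    ∃ ω : K → Fin (D + 2) → Fin (scale n₀ (J + 1)), ∀ e t,
      S.expectedLoad (fun p => delayLaw n₀ J p)
        (fun i p => N i p + blockwiseDelay (J + 1) (scale n₀ (J + 1)) p (ω i)) e t ≤
        2 + (1 / 2) ^ J := by
  have : NeZero (scale n₀ (J + 1)) := ⟨(scale_pos n₀ (J + 1)).ne'⟩
  have hscale : (0 : ℝ) < scale n₀ J := mod_cast scale_pos n₀ J
  have hhalf₀ : (0 : ℝ) ≤ (1 / 2) ^ (J + 1) := by positivity
  have hhalf₁ : (1 / 2 : ℝ) ^ (J + 1) ≤ 1 := pow_le_one₀ (by norm_num) (by norm_num)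
  have hsum : (2 + (1 / 2) ^ J : ℝ) = 2 + (1 / 2) ^ (J + 1) + (1 / 2) ^ (J + 1) := by ring
  have hW : 0 < blockLength (J + 1) (scale n₀ (J + 1)) :=
    Nat.mul_pos (by positivity) (scale_pos n₀ (J + 1))
  have hR : 0 < spread n₀ (J + 1) := by rw [spread_succ]; have := scale_pos n₀ (J + 1); omega
  have hd : 1 ≤ 24 * blockLength (J + 1) (scale n₀ (J + 1)) * spread n₀ (J + 1) ^ 2 :=
    Nat.succ_le_of_lt (by positivity)
  rw [hsum]
  refine S.exists_expectedLoad_add_le (m := 2 / scale n₀ J) (v := 2)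
    (M := 2 * blockLength (J + 1) (scale n₀ (J + 1))) (R := spread n₀ (J + 1))
    (d := 24 * blockLength (J + 1) (scale n₀ (J + 1)) * spread n₀ (J + 1) ^ 2)
    (dependsOn_blockwiseDelay _ _) (fun p => card_le_two) (card_filter_mem_adjacentBlocks_le hW)
    (fun p => (isDelayLaw_delayLaw n₀ J p).nonneg) (fun p => delayLaw_le n₀ J p)
    (fun p => mixLaw_blockwiseDelay_delayLaw n₀ J p ▸ isDelayLaw_delayLaw n₀ (J + 1) p)
    (by simpa only [mixLaw_blockwiseDelay_delayLaw] using hload) (by positivity) (by positivity)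
    (by positivity) (by linarith) (mod_cast hd) ?_ ?_
  · have hμ : (2 + (1 / 2) ^ (J + 1) : ℝ) ≤ 3 := by linarith
    have hpos : (0 : ℝ) ≤
        8 * blockLength (J + 1) (scale n₀ (J + 1)) * spread n₀ (J + 1) ^ 2 := by positivity
    push_cast
    linarith [mul_le_mul_of_nonneg_left hμ hpos]
  · refine le_trans ?_ (hn₀ J)
    gcongr
    linarith

theorem exists_isDelayProfile (S : PathSystem E K (Fin (D + 1))) [Finite K]
    (hn₀ : IsBaseLevel n₀) {N : K → Fin (D + 1) → ℤ}
    (hload : ∀ e t, S.expectedLoad (fun p => delayLaw n₀ J p) N e t ≤ 2 + (1 / 2) ^ J) :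
    ∃ d : K → ℕ → ℕ, (∀ i, IsDelayProfile (spread n₀ J) J (d i)) ∧ ∀ e t,
      S.expectedLoad (fun p => delayLaw n₀ 0 p) (fun i p => N i p + d i p) e t ≤ 3 := by
  induction J generalizing N with
  | zero =>
    refine ⟨fun _ _ => 0, fun i => ⟨Nat.zero_le _, fun p => le_rfl, fun p => Nat.zero_le _⟩, ?_⟩
    norm_num at hload
    simpa using hload
  | succ J ih =>
    obtain ⟨ω, hω⟩ := S.exists_expectedLoad_delayLaw_le hn₀ hload
    obtain ⟨d, hd, hload'⟩ := ih hω
    refine ⟨fun i p => levelDelay (J + 1) (scale n₀ (J + 1)) (fun b => ω i (Fin.ofNat (D + 2) b)) p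
      + d i p, fun i => ?_, ?_⟩
    · rw [spread_succ]
      exact (hd i).levelDelay_add (fun b => (ω i _).isLt.le) (scale_pos n₀ (J + 1))
    · simpa only [Nat.cast_add, blockwiseDelay, add_assoc] using hload'

end PathSystem

/-! ### Crossing times -/

namespace PathSystem

variable {E K : Type*} {D n₀ J : ℕ}

theorem expectedLoad_delayLaw_le (S : PathSystem E K (Fin (D + 1)))
    (hS : ∀ e, #(S.users e) ≤ scale n₀ J) (N : K → Fin (D + 1) → ℤ) (e : E) (t : ℤ) :
    S.expectedLoad (fun p => delayLaw n₀ J p) N e t ≤ 2 :=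
  calc S.expectedLoad (fun p => delayLaw n₀ J p) N e t
      ≤ #(S.users e) • (2 / scale n₀ J : ℝ) := sum_le_card_nsmul _ _ _ fun i _ => delayLaw_le ..
    _ ≤ scale n₀ J • (2 / scale n₀ J : ℝ) := by gcongr; exact hS e
    _ = 2 := by
        rw [nsmul_eq_mul, mul_div_cancel₀ _ (Nat.cast_ne_zero.2 (scale_pos n₀ J).ne')]

theorem card_filter_eq_le (S : PathSystem E K (Fin (D + 1))) {N : K → Fin (D + 1) → ℤ} {e : E}
    {t : ℤ} (hload : S.expectedLoad (fun p => delayLaw n₀ 0 p) N e t ≤ 3) :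
    #{i ∈ S.users e | N i (S.pos e i) = t} ≤ 3 * scale n₀ 0 := by
  have hscale : (0 : ℝ) < scale n₀ 0 := mod_cast scale_pos n₀ 0
  have hatom (i) (hi : i ∈ {i ∈ S.users e | N i (S.pos e i) = t}) :
      delayLaw n₀ 0 (S.pos e i) (t - N i (S.pos e i)) = (scale n₀ 0 : ℝ)⁻¹ := by
    rw [(mem_filter.1 hi).2, sub_self, delayLaw, uniformLaw_zero (scale_pos n₀ 0)]
  have hcard : (#{i ∈ S.users e | N i (S.pos e i) = t} : ℝ) * (scale n₀ 0 : ℝ)⁻¹ ≤ 3 :=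
    calc (#{i ∈ S.users e | N i (S.pos e i) = t} : ℝ) * (scale n₀ 0 : ℝ)⁻¹
        = ∑ i ∈ S.users e with N i (S.pos e i) = t,
            delayLaw n₀ 0 (S.pos e i) (t - N i (S.pos e i)) := by
          rw [sum_congr rfl hatom, sum_const, nsmul_eq_mul]
      _ ≤ S.expectedLoad (fun p => delayLaw n₀ 0 p) N e t :=
          sum_le_sum_of_subset_of_nonneg (filter_subset _ _)
            fun i _ _ => (isDelayLaw_delayLaw n₀ 0 _).nonneg _
      _ ≤ 3 := hload
  rw [← div_eq_mul_inv, div_le_iff₀ hscale] at hcard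
  exact_mod_cast hcard

theorem exists_crossing_times (S : PathSystem E K (Fin (D + 1))) [Finite K]
    (hn₀ : IsBaseLevel n₀) (hS : ∀ e, #(S.users e) ≤ D) :
    ∃ τ : K → ℕ → ℕ, (∀ i, τ i 0 ≤ 32 * scale n₀ 0 * D) ∧ (∀ i, StrictMono (τ i)) ∧
      (∀ i p, τ i (p + 1) ≤ τ i p + 2) ∧
      ∀ e t, #{i ∈ S.users e | τ i (S.pos e i) = t} ≤ 3 * scale n₀ 0 := by
  obtain rfl | hD := eq_or_ne D 0
  · refine ⟨fun _ => id, fun _ => Nat.zero_le _, fun _ => strictMono_id,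
      fun _ p => ?_, fun e t => ?_⟩
    · exact Nat.le_succ (p + 1)
    · exact ((card_filter_le _ _).trans (hS e)).trans (Nat.zero_le _)
  set J := Nat.log 16 D + 1
  have hscale (j : ℕ) : scale n₀ j = scale n₀ 0 * 16 ^ j := pow_add 16 n₀ j
  have hDJ : D ≤ scale n₀ J := by
    rw [hscale]
    exact (Nat.lt_pow_succ_log_self (by norm_num) D).le.trans
      (Nat.le_mul_of_pos_left _ (scale_pos n₀ 0))
  have hJD : spread n₀ J ≤ 32 * scale n₀ 0 * D := by
    have hlog := Nat.mul_le_mul_left (32 * scale n₀ 0) (Nat.pow_log_le_self 16 hD)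
    have hspread := spread_le n₀ J
    rw [hscale, pow_succ] at hspread
    linarith
  obtain ⟨d, hd, hload⟩ := S.exists_isDelayProfile hn₀ (J := J) (N := fun _ p => (p : ℕ))
    fun e t => (S.expectedLoad_delayLaw_le (fun e => (hS e).trans hDJ) _ e t).trans
      (le_add_of_nonneg_right (by positivity))
  refine ⟨fun i p => p + d i p, fun i => ?_, fun i => ?_, fun i p => ?_, fun e t => ?_⟩
  · simpa using (hd i).zero_le.trans hJD
  · exact strictMono_nat_of_lt_succ fun p =>
      add_lt_add_of_lt_of_le p.lt_succ_self ((hd i).le_succ p)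
  · have hsucc := (hd i).succ_le p
    beta_reduce
    split_ifs at hsucc <;> omega
  · exact_mod_cast S.card_filter_eq_le (hload e t)

end PathSystem

/-! ### Schedules from crossing times -/

section Crossed

variable {τ : ℕ → ℕ} {ℓ p t T : ℕ}

/-- The number of edges traversed before time `t` by a packet that crosses the edge at position `p`
of its path, which has `ℓ` edges, in time step `τ p + 1`. -/
def crossed (τ : ℕ → ℕ) (ℓ t : ℕ) : ℕ := #{p ∈ range ℓ | τ p < t}

theorem crossed_le (τ : ℕ → ℕ) (ℓ t : ℕ) : crossed τ ℓ t ≤ ℓ :=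
  (card_filter_le _ _).trans_eq (card_range ℓ)

theorem crossed_zero (τ : ℕ → ℕ) (ℓ : ℕ) : crossed τ ℓ 0 = 0 := by
  simp [crossed]

theorem lt_crossed_iff (hτ : Monotone τ) : p < crossed τ ℓ t ↔ p < ℓ ∧ τ p < t := by
  constructor
  · intro hp
    by_contra! h
    refine hp.not_ge ((card_le_card fun q hq => ?_).trans_eq (card_range p))
    rw [mem_filter, mem_range] at hq
    by_contra hpq
    have hpq : p ≤ q := by simpa using hpq
    have := h (hpq.trans_lt hq.1)
    have := hτ hpq
    omega
  · rintro ⟨hp, hpt⟩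
    rw [Nat.lt_iff_add_one_le, ← card_range (p + 1)]
    refine card_le_card fun q hq => ?_
    have hqp : q ≤ p := Nat.lt_succ_iff.1 (mem_range.1 hq)
    exact mem_filter.2 ⟨mem_range.2 (hqp.trans_lt hp), (hτ hqp).trans_lt hpt⟩

theorem apply_le_apply_zero_add (hτ : ∀ p, τ (p + 1) ≤ τ p + 2) (p : ℕ) :
    τ p ≤ τ 0 + 2 * p := by
  induction p with
  | zero => exact Nat.le_add_right _ _
  | succ p ih => have := hτ p; omega

theorem crossed_eq_length (hT : ∀ p < ℓ, τ p < T) : crossed τ ℓ T = ℓ := by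
  rw [crossed, filter_true_of_mem fun p hp => hT p (mem_range.1 hp), card_range]

theorem crossed_succ (hτ : StrictMono τ) (ℓ t : ℕ) :
    crossed τ ℓ (t + 1) = crossed τ ℓ t ∨ crossed τ ℓ (t + 1) = crossed τ ℓ t + 1 := by
  have hmono : crossed τ ℓ t ≤ crossed τ ℓ (t + 1) :=
    card_le_card (monotone_filter_right _ fun p _ hp => Nat.lt_succ_of_lt hp)
  have hstep : crossed τ ℓ (t + 1) ≤ crossed τ ℓ t + 1 := by
    by_contra! h
    obtain ⟨hlt, hcross⟩ := (lt_crossed_iff hτ.monotone).1 h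
    have hprev : τ (crossed τ ℓ t) < τ (crossed τ ℓ t + 1) := hτ (Nat.lt_succ_self _)
    exact lt_irrefl _ ((lt_crossed_iff hτ.monotone).2
      ⟨(Nat.lt_succ_self _).trans hlt, by omega⟩)
  omega

theorem apply_crossed_of_crossed_succ (hτ : Monotone τ)
    (h : crossed τ ℓ (t + 1) = crossed τ ℓ t + 1) : τ (crossed τ ℓ t) = t := by
  obtain ⟨hlt, hle⟩ := (lt_crossed_iff hτ).1 (h.symm ▸ Nat.lt_add_one (crossed τ ℓ t))
  have hge : ¬ τ (crossed τ ℓ t) < t := fun hcross =>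
    lt_irrefl _ ((lt_crossed_iff hτ).2 ⟨hlt, hcross⟩)
  omega

theorem subsingleton_setOf_crossed_eq (hτ : Monotone τ) (hτ' : ∀ p, τ (p + 1) ≤ τ p + 2)
    (hp : 0 < p) (hpℓ : p < ℓ) :
    {t | crossed τ ℓ t = p ∧ crossed τ ℓ (t + 1) = p}.Subsingleton := by
  obtain ⟨q, rfl⟩ := Nat.exists_eq_add_one.2 hp
  -- the packet arrives at time `τ q + 1` and leaves by time `τ q + 3`
  have hwait (t) (ht : crossed τ ℓ t = q + 1 ∧ crossed τ ℓ (t + 1) = q + 1) : t = τ q + 1 := by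
    have harrive := ((lt_crossed_iff (p := q) hτ).1 (ht.1.symm ▸ Nat.lt_add_one q)).2
    have hstay : ¬ τ (q + 1) < t + 1 := fun hleave =>
      absurd ((lt_crossed_iff hτ).2 ⟨hpℓ, hleave⟩) (ht.2 ▸ lt_irrefl _)
    have := hτ' q
    omega
  exact fun s hs t ht => (hwait s hs).trans (hwait t ht).symm

end Crossed

section Instances

variable (I : RInst) {D : ℕ}

open Classical in
/-- The path system of a routing instance whose paths have at most `D` edges. -/
noncomputable def pathSystem (hlen : ∀ i, (I.path i).length ≤ D) :
    PathSystem I.E (Fin I.k) (Fin (D + 1)) where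
  users e := {i | e ∈ I.path i}
  pos e i := ⟨(I.path i).idxOf e, Nat.lt_succ_of_le (List.idxOf_le_length.trans (hlen i))⟩
  eq_of_pos_eq he _ h := (List.idxOf_inj (mem_filter.1 he).2).1 (congrArg Fin.val h)

variable {I}

theorem card_users_pathSystem_le_congestion (hlen : ∀ i, (I.path i).length ≤ D) (e : I.E) :
    #((pathSystem I hlen).users e) ≤ I.congestion := by
  classical
  refine le_of_eq_of_le ?_ (le_sup (f := fun e : I.E => Nat.card {i : Fin I.k | e ∈ I.path i})
    (mem_univ e))
  rw [Nat.card_coe_set_eq, ← Set.ncard_coe_finset]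
  simp [pathSystem]

theorem loadLE_crossed (hnodup : ∀ i, (I.path i).Nodup) (hlen : ∀ i, (I.path i).length ≤ D)
    {τ : Fin I.k → ℕ → ℕ} (hτ : ∀ i, Monotone (τ i)) {c : ℕ}
    (hload : ∀ e t,
      #{i ∈ (pathSystem I hlen).users e | τ i ((pathSystem I hlen).pos e i) = t} ≤ c) :
    I.LoadLE (fun i => crossed (τ i) (I.path i).length) c := by
  classical
  intro e t
  rw [Nat.card_coe_set_eq]
  refine le_trans ?_ (hload e t)
  rw [← Set.ncard_coe_finset]
  refine Set.ncard_le_ncard ?_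
  rintro i ⟨hstep, he⟩
  obtain ⟨hlt, rfl⟩ := List.getElem?_eq_some_iff.1 he
  have hcross := apply_crossed_of_crossed_succ (hτ i) hstep
  refine mem_coe.2 (mem_filter.2 ⟨mem_filter.2 ⟨mem_univ i, List.getElem_mem hlt⟩, ?_⟩)
  rwa [show ((pathSystem I hlen).pos _ i : ℕ) = _ from (hnodup i).idxOf_getElem _ hlt]

end Instances

end PacketRouting

open PacketRouting in
theorem exists_schedule_const_load_const_buffers_general :
    ∃ c : ℕ, ∀ (I : RInst) (D : ℕ), (∀ i, (I.path i).Nodup) →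
      (∀ i, (I.path i).length ≤ D) → I.congestion ≤ D →
      ∃ σ : Fin I.k → ℕ → ℕ, I.IsSchedule σ ∧ I.LoadLE σ c ∧
        I.CompletedBy σ (c * D) ∧
        ∀ (i : Fin I.k) (p : ℕ), 0 < p → p < (I.path i).length →
          {t : ℕ | σ i t = p ∧ σ i (t + 1) = p}.Subsingleton := by
  obtain ⟨n₀, hn₀⟩ := exists_isBaseLevel
  refine ⟨32 * scale n₀ 0 + 2, fun I D hnodup hlen hcong => ?_⟩
  obtain ⟨τ, hstart, hmono, hgap, hload⟩ := (pathSystem I hlen).exists_crossing_times hn₀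
    fun e => (card_users_pathSystem_le_congestion hlen e).trans hcong
  have hscale := scale_pos n₀ 0
  have hfinish (i p) (hp : p < (I.path i).length) : τ i p < (32 * scale n₀ 0 + 2) * D := by
    have hp' := apply_le_apply_zero_add (hgap i) p
    have hℓ := hlen i
    have hτ₀ := hstart i
    rw [add_mul]
    omega
  exact ⟨fun i => crossed (τ i) (I.path i).length,
    ⟨fun _ => crossed_zero _ _, fun i => crossed_succ (hmono i) _, fun _ => crossed_le _ _⟩,
    fun e t => (loadLE_crossed hnodup hlen (fun i => (hmono i).monotone) hload e t).trans
      (by omega),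
    fun i => crossed_eq_length (hfinish i),
    fun i _ => subsingleton_setOf_crossed_eq (hmono i).monotone (hgap i)⟩

/-- There is a universal constant `c` such that every routing
instance in which every path has exactly `D` edges and whose congestion is at
most `D` admits a schedule with makespan at most `c·D` and load at most `c`,
in which moreover every packet waits at most one time unit at each
intermediate vertex of its path. -/
theorem exists_schedule_const_load_const_buffers :
    ∃ c : ℕ, ∀ (I : RInst) (D : ℕ), I.Valid →
      (∀ i, (I.path i).length = D) → I.congestion ≤ D →
      ∃ σ : Fin I.k → ℕ → ℕ, I.IsSchedule σ ∧ I.LoadLE σ c ∧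
        I.CompletedBy σ (c * D) ∧
        ∀ (i : Fin I.k) (p : ℕ), 0 < p → p < (I.path i).length →
          {t : ℕ | σ i t = p ∧ σ i (t + 1) = p}.Subsingleton :=
  exists_schedule_const_load_const_buffers_general.imp fun _ h I D hV hlen =>
    h I D hV.2 fun i => (hlen i).le
end

section
/- Let r ≥ 1 and let W₁, …, W_r be positive integers with W_{j+1} ≤ √(W_j) for every 1 ≤ j < r. Let X₁, …, X_r be independent random variables, X_j uniformly distributed on {1, …, W_j}, and let c be an integer. If for an integer t one has Pr[c + X₁ + ⋯ + X_r = t] > 0, then Pr[c + X₁ + ⋯ + X_r = t] ≥ 1/W₁². -/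
theorem one_div_card_le_card_div_card {α K : Type*} [Finite α] [Semifield K]
    [LinearOrder K] [IsStrictOrderedRing K] {E : Set α} (hE : E.Nonempty) :
    1 / (Nat.card α : K) ≤ (Nat.card E : K) / Nat.card α := by
  have : Nonempty E := hE.to_subtype
  have hcard : (1 : K) ≤ Nat.card E := Nat.one_le_cast.mpr Nat.card_pos
  gcongr

theorem prod_le_sq_first_of_sq_succ_le {M : Type*} [CommMonoid M] [Preorder M] [MulLeftMono M]
    {n : ℕ} {W : Fin (n + 1) → M} (hsq : ∀ j : Fin n, W j.succ ^ 2 ≤ W j.castSucc)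
    (hlast : W (Fin.last n) ≤ W (Fin.last n) ^ 2) : ∏ j, W j ≤ W 0 ^ 2 := by
  induction n with
  | zero => simpa using hlast
  | succ n ih =>
    -- The whole tail is absorbed into one more factor `W 0`, since `W 1 ^ 2 ≤ W 0`.
    have htail : ∏ j : Fin (n + 1), W j.succ ≤ W 1 ^ 2 := ih (fun j => hsq j.succ) hlast
    calc ∏ j, W j = W 0 * ∏ j : Fin (n + 1), W j.succ := Fin.prod_univ_succ W
      _ ≤ W 0 * W 0 := mul_le_mul_right (htail.trans (hsq 0)) (W 0)
      _ = W 0 ^ 2 := (sq (W 0)).symm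

theorem prod_le_sq_first_of_succ_le_sqrt {r : ℕ} (hr : 0 < r) {W : Fin r → ℕ}
    (hsqrt : ∀ (j : ℕ) (h1 : j + 1 < r),
      (W ⟨j + 1, h1⟩ : ℝ) ≤ Real.sqrt (W ⟨j, Nat.lt_of_succ_lt h1⟩)) :
    ∏ j, W j ≤ W ⟨0, hr⟩ ^ 2 := by
  obtain _ | n := r
  · exact absurd hr (lt_irrefl 0)
  refine prod_le_sq_first_of_sq_succ_le (fun j => ?_) (Nat.le_self_pow two_ne_zero _)
  have hj : (W j.succ : ℝ) ≤ Real.sqrt (W j.castSucc) := hsqrt j (Nat.succ_lt_succ j.isLt)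
  exact_mod_cast (Real.le_sqrt (Nat.cast_nonneg _) (Nat.cast_nonneg _)).mp hj

theorem crossing_time_prob_lower_general (r : ℕ) (hr : 0 < r) (W : Fin r → ℕ)
    (hsqrt : ∀ (j : ℕ) (h1 : j + 1 < r),
      (W ⟨j + 1, h1⟩ : ℝ) ≤ Real.sqrt (W ⟨j, Nat.lt_of_succ_lt h1⟩))
    (E : Set ((j : Fin r) → Fin (W j))) (hE : E.Nonempty) :
    1 / ((W ⟨0, hr⟩ : ℝ)) ^ 2 ≤ (Nat.card E : ℝ) / ∏ j, (W j : ℝ) := by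
  have hprod : 0 < ∏ j, (W j : ℝ) :=
    Finset.prod_pos fun j _ => Nat.cast_pos.mpr (hE.some j).pos
  have hcard : (Nat.card ((j : Fin r) → Fin (W j)) : ℝ) = ∏ j, (W j : ℝ) := by simp
  calc 1 / (W ⟨0, hr⟩ : ℝ) ^ 2 ≤ 1 / ∏ j, (W j : ℝ) := by
        refine one_div_le_one_div_of_le hprod ?_
        exact_mod_cast prod_le_sq_first_of_succ_le_sqrt hr hsqrt
    _ ≤ (Nat.card E : ℝ) / ∏ j, (W j : ℝ) := hcard ▸ one_div_card_le_card_div_card hE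

/-- Let `r ≥ 1` and let `W 0, …, W (r-1)` be positive integers with
`W (j+1) ≤ √(W j)`. Let `X j` be independent, `X j` uniform on `{1,…,W j}` (encoded
as `x j + 1` for a uniform element `x` of the product `Π j, Fin (W j)`), and `c` an
integer. If `Pr[c + X 0 + ⋯ + X (r-1) = t] > 0` for an integer `t`, then this
probability is at least `1 / (W 0)²`. -/
theorem crossing_time_prob_lower (r : ℕ) (hr : 0 < r) (W : Fin r → ℕ)
    (hpos : ∀ j, 0 < W j)
    (hsqrt : ∀ (j : ℕ) (h1 : j + 1 < r),
      (W ⟨j + 1, h1⟩ : ℝ) ≤ Real.sqrt (W ⟨j, by omega⟩))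
    (c t : ℤ)
    (hpossible : 0 < Nat.card {x : (j : Fin r) → Fin (W j) //
        c + ∑ j, ((x j : ℤ) + 1) = t}) :
    1 / ((W ⟨0, hr⟩ : ℝ)) ^ 2
      ≤ (Nat.card {x : (j : Fin r) → Fin (W j) //
          c + ∑ j, ((x j : ℤ) + 1) = t} : ℝ) / ∏ j, (W j : ℝ) :=
  crossing_time_prob_lower_general r hr W hsqrt {x | c + ∑ j, ((x j : ℤ) + 1) = t}
    (Set.nonempty_coe_sort.mp (Nat.card_pos_iff.mp hpossible).1)
end
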